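/- arXiv:quant-ph/0506001 — 10 statements merged into one kernel-verified Lean document; each statement's English description precedes it below -/
import Mathlib

section
/- Let C be a nonempty finite set, let p : C → ℝ be a probability distribution (p(c) ≥ 0 for all c and Σ_{c∈C} p(c) = 1), let D : C → ℝ be a function with D(c) ≥ 0 for all c, and let b ≥ 0 be a real number with Σ_{c∈C} p(c)·D(c) ≤ b. Then for every real r > 0, Σ_{c∈C} p(c)·2^{−r·(D(c) + 6·√(D(c)+1) + 4)} ≥ 2^{−r·(b + 6·√(b+1) + 4)}. -/
/-- Averaging step in the binding–concealing trade-off proof for quantum string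
commitment: convexity of `x ↦ 2^(-r*x)` combined with concavity of `√`. -/
theorem qsc_averaging_step (C : Type*) [Fintype C] [Nonempty C]
    (p : C → ℝ) (hp_nonneg : ∀ c, 0 ≤ p c) (hp_sum : ∑ c, p c = 1)
    (D : C → ℝ) (hD_nonneg : ∀ c, 0 ≤ D c)
    (b : ℝ) (hb : 0 ≤ b) (hDb : ∑ c, p c * D c ≤ b) :
    ∀ r : ℝ, 0 < r →
      ∑ c, p c * (2 : ℝ) ^ (-(r * (D c + 6 * Real.sqrt (D c + 1) + 4))) ≥
        (2 : ℝ) ^ (-(r * (b + 6 * Real.sqrt (b + 1) + 4))) := by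
  intro r hr
  have h1 := (convexOn_rpow_left (b := (2 : ℝ)) (by norm_num)).map_sum_le
    (t := Finset.univ) (w := p)
    (p := fun c => -(r * (D c + 6 * Real.sqrt (D c + 1) + 4)))
    (fun c _ => hp_nonneg c) hp_sum (fun c _ => Set.mem_univ _)
  have h2 := (Real.strictConcaveOn_sqrt.concaveOn).le_map_sum
    (t := Finset.univ) (w := p) (p := fun c => D c + 1)
    (fun c _ => hp_nonneg c) hp_sum
    (fun c _ => Set.mem_Ici.2 (by linarith [hD_nonneg c]))
  simp only [smul_eq_mul] at h1 h2
  have e1 : ∑ c, p c * (D c + 1) = ∑ c, p c * D c + 1 := by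
    simp only [mul_add, Finset.sum_add_distrib, mul_one, hp_sum]
  have e2 : ∑ c, p c * (-(r * (D c + 6 * Real.sqrt (D c + 1) + 4)))
      = -(r * (∑ c, p c * D c + 6 * ∑ c, p c * Real.sqrt (D c + 1) + 4)) := by
    have e3 : ∀ c, p c * (-(r * (D c + 6 * Real.sqrt (D c + 1) + 4)))
        = (-r) * (p c * D c) + (-r * 6) * (p c * Real.sqrt (D c + 1)) + (-r * 4) * p c := by
      intro c; ring
    simp only [e3, Finset.sum_add_distrib, ← Finset.mul_sum, hp_sum]
    ring
  rw [e1] at h2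
  rw [e2] at h1
  have h3 : Real.sqrt (∑ c, p c * D c + 1) ≤ Real.sqrt (b + 1) :=
    Real.sqrt_le_sqrt (by linarith)
  refine ge_iff_le.2 (le_trans ?_ h1)
  apply Real.rpow_le_rpow_of_exponent_le (by norm_num)
  apply neg_le_neg
  apply mul_le_mul_of_nonneg_left _ hr.le
  linarith
end

section
/- For every real number b > 15, setting r = 1 + 1/b, one has (1 − 1/r)·(1 − 1/√r)·2^{−r·(b + 6·√(b+1) + 4)} ≥ 2^{−(b + 8·√(b+1) + 8)}. -/
/-- Numerical estimate used in the trade-off theorem for quantum string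
commitment in the regime `b > 15`, with `r = 1 + 1/b`. -/
theorem qsc_estimate_large_b (b : ℝ) (hb : 15 < b) (r : ℝ) (hr : r = 1 + 1 / b) :
    (1 - 1 / r) * (1 - 1 / Real.sqrt r) *
        (2 : ℝ) ^ (-(r * (b + 6 * Real.sqrt (b + 1) + 4))) ≥
      (2 : ℝ) ^ (-(b + 8 * Real.sqrt (b + 1) + 8)) := by
  have hb0 : 0 < b := by linarith
  have hrs : Real.sqrt r = Real.sqrt (b + 1) / Real.sqrt b := by
    rw [← Real.sqrt_div (by linarith), hr]
    congr 1
    field_simp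
  have hs2 : Real.sqrt (b + 1) ^ 2 = b + 1 := Real.sq_sqrt (by linarith)
  have ht2 : Real.sqrt b ^ 2 = b := Real.sq_sqrt hb0.le
  have hs4 : 4 < Real.sqrt (b + 1) := Real.lt_sqrt_of_sq_lt (by linarith)
  have ht0 : 0 < Real.sqrt b := Real.sqrt_pos.2 hb0
  have hts : Real.sqrt b ≤ Real.sqrt (b + 1) := Real.sqrt_le_sqrt (by linarith)
  rw [hrs]
  generalize Real.sqrt (b + 1) = s at *
  generalize Real.sqrt b = t at *
  have hs0 : 0 < s := by linarith
  have h1 : 1 - 1 / r = 1 / s ^ 2 := by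
    rw [hs2, hr]
    field_simp
    ring
  have h2 : 1 / (2 * s ^ 2) ≤ 1 - 1 / (s / t) := by
    have e : 1 - 1 / (s / t) = 1 / (s * (s + t)) := by
      field_simp
      nlinarith
    rw [e]
    apply one_div_le_one_div_of_le (by positivity)
    nlinarith
  have h3 : s ^ 2 ≤ (2 : ℝ) ^ s := by
    have hl := Real.log_le_sub_one_of_pos (show 0 < s / 4 by positivity)
    have h4 : Real.log 4 = 2 * Real.log 2 := by
      rw [show (4 : ℝ) = 2 ^ 2 by norm_num, Real.log_pow]
      norm_num
    rw [Real.log_div hs0.ne' (by norm_num), h4] at hl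
    have hl2 := Real.log_two_gt_d9
    rw [← Real.log_le_log_iff (by positivity) (by positivity), Real.log_pow,
      Real.log_rpow (by norm_num)]
    push_cast
    nlinarith
  have h5 : (2 : ℝ) ^ (-(1 + 2 * s)) ≤ 1 / s ^ 2 * (1 / (2 * s ^ 2)) := by
    rw [Real.rpow_neg (by norm_num), Real.rpow_add (by norm_num), Real.rpow_one,
      two_mul s, Real.rpow_add (by norm_num), ← one_div, one_div_mul_one_div]
    apply one_div_le_one_div_of_le (by positivity)
    have := mul_le_mul h3 h3 (by positivity) (by positivity)
    linarith
  have h6 : r * (b + 6 * s + 4) ≤ b + 6 * s + 7 := by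
    have e : r * (b + 6 * s + 4) = b + 6 * s + 5 + (6 * s + 4) / b := by
      rw [hr]
      field_simp
      ring
    have : (6 * s + 4) / b ≤ 2 := by
      rw [div_le_iff₀ hb0]
      nlinarith
    linarith
  calc (2 : ℝ) ^ (-(b + 8 * s + 8))
      = (2 : ℝ) ^ (-(1 + 2 * s)) * (2 : ℝ) ^ (-(b + 6 * s + 7)) := by
        rw [← Real.rpow_add (by norm_num)]
        congr 1
        ring
    _ ≤ (1 / s ^ 2 * (1 / (2 * s ^ 2))) * (2 : ℝ) ^ (-(r * (b + 6 * s + 4))) := by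
        apply mul_le_mul h5 _ (by positivity) (by positivity)
        apply Real.rpow_le_rpow_of_exponent_le (by norm_num)
        linarith
    _ ≤ _ := by
        rw [h1]
        gcongr
end

section
/- For every real number b ≥ 0 there exists a real number r > 1 such that (1 − 1/r)·(1 − 1/√r)·2^{−r·(b + 6·√(b+1) + 4)} ≥ 2^{−(b + 8·√(b+1) + 16)}. -/
/-- Key quantitative lemma behind the binding–concealing trade-off
`a + b + 8√(b+1) + 16 ≥ n` for quantum string commitment: for an optimal
choice of `r > 1` the cheating probability lower bound
`(1 − 1/r)(1 − 1/√r)·2^(−r·(b + 6√(b+1) + 4))` is at least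
`2^(−(b + 8√(b+1) + 16))`. -/
theorem qsc_cheating_bound (b : ℝ) (hb : 0 ≤ b) :
    ∃ r : ℝ, 1 < r ∧
      (1 - 1 / r) * (1 - 1 / Real.sqrt r) *
          (2 : ℝ) ^ (-(r * (b + 6 * Real.sqrt (b + 1) + 4))) ≥
        (2 : ℝ) ^ (-(b + 8 * Real.sqrt (b + 1) + 16)) := by
  obtain ⟨s, hs⟩ : ∃ s, s = √(b + 1) := ⟨_, rfl⟩
  have hs1 : 1 ≤ s := by rw [hs]; exact Real.one_le_sqrt.mpr (by linarith)
  have hbs : b = s ^ 2 - 1 := by rw [hs, Real.sq_sqrt (by linarith)]; ring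
  have hs0 : 0 < s := by linarith
  rw [← hs]
  have hr : (1:ℝ) < 1 + 1 / s := by have : 0 < 1 / s := by positivity
                                    linarith
  refine ⟨1 + 1 / s, hr, ?_⟩
  have h1 : 1 - 1 / (1 + 1 / s) = 1 / (s + 1) := by field_simp; ring
  have h2 : 1 / (2 * (s + 1)) ≤ 1 - 1 / √(1 + 1 / s) := by
    obtain ⟨t, ht⟩ : ∃ t, t = √(1 + 1 / s) := ⟨_, rfl⟩
    have ht1 : 1 ≤ t := by rw [ht]; exact Real.one_le_sqrt.mpr hr.le
    have ht2 : t ^ 2 = 1 + 1 / s := by rw [ht, Real.sq_sqrt (by linarith)]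
    have e : 1 / (s + 1) = 1 - 1 / t ^ 2 := by rw [ht2, h1]
    have e2 : 1 / (2 * (s + 1)) = (1 / (s + 1)) / 2 := by field_simp
    rw [← ht, e2, e]
    have e3 : 1 / t ^ 2 = (1 / t) ^ 2 := by field_simp
    rw [e3]
    nlinarith [sq_nonneg (1 - 1 / t)]
  have h3 : (2:ℝ) ^ (-((1 + 1 / s) * (b + 6 * s + 4))) ≥
      (2:ℝ) ^ (-(b + 8 * s + 16)) * (2:ℝ) ^ (s + 3) := by
    rw [← Real.rpow_add (by norm_num)]
    apply Real.rpow_le_rpow_of_exponent_le (by norm_num)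
    have e : -((1 + 1 / s) * (b + 6 * s + 4)) = -(s ^ 2 + 7 * s + 9) - 3 * (1 / s) := by
      rw [hbs]; field_simp; ring
    have : 1 / s ≤ 1 := by rw [div_le_one hs0]; exact hs1
    rw [e, hbs]; linarith
  have h4 : 2 * (s + 1) ^ 2 ≤ (2:ℝ) ^ (s + 3) := by
    have ha : 1 + 0.17 * s ≤ (2:ℝ) ^ (s / 4) := by
      rw [Real.rpow_def_of_pos (by norm_num)]
      have := Real.add_one_le_exp (Real.log 2 * (s / 4))
      nlinarith [Real.log_two_gt_d9]
    have hb' : (2:ℝ) ^ (s + 3) = 8 * ((2:ℝ) ^ (s / 4)) ^ 4 := by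
      rw [← Real.rpow_natCast, ← Real.rpow_mul (by norm_num), Real.rpow_add (by norm_num)]
      norm_num
      rw [mul_comm]
    have hc : (1 + 0.17 * s) ^ 4 ≤ ((2:ℝ) ^ (s / 4)) ^ 4 := by gcongr
    have hd : s + 1 ≤ 2 * (1 + 0.17 * s) ^ 2 := by nlinarith [sq_nonneg (s - 2.8)]
    have he : (s + 1) ^ 2 ≤ (2 * (1 + 0.17 * s) ^ 2) ^ 2 := by gcongr
    rw [hb']; nlinarith
  have h5 : 1 / (2 * (s + 1) ^ 2) ≤ (1 - 1 / (1 + 1 / s)) * (1 - 1 / √(1 + 1 / s)) := by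
    rw [h1]
    calc 1 / (2 * (s + 1) ^ 2) = 1 / (s + 1) * (1 / (2 * (s + 1))) := by field_simp
      _ ≤ _ := by gcongr
  have hP : (0:ℝ) < (2:ℝ) ^ (-(b + 8 * s + 16)) := by positivity
  have h6 : (2:ℝ) ^ (-(b + 8 * s + 16)) ≤
      (1 / (2 * (s + 1) ^ 2)) * ((2:ℝ) ^ (-(b + 8 * s + 16)) * (2:ℝ) ^ (s + 3)) := by
    rw [one_div_mul_eq_div, le_div_iff₀ (by positivity)]
    gcongr
  refine ge_iff_le.mpr (h6.trans ?_)
  have h7 : 0 ≤ 1 / (2 * (s + 1) ^ 2) := by positivity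
  exact mul_le_mul h5 h3 (by positivity) (h7.trans h5)
end

section
/- (Substate theorem.) Let d, d' be positive integers with d' ≥ d. Let σ and τ be density matrices on ℂ^d with τ positive definite. Let σ̄ : Fin d × Fin d' → ℂ be a unit vector that purifies σ, i.e., Σ_{j∈Fin d'} σ̄(i,j)·conj(σ̄(i',j)) = σ(i,i') for all i, i'. Let r > 1 be real, let k = D(σ‖τ) + 6·√(D(σ‖τ)+1) + 4, and let p = (r−1)/(r·2^{r·k}). Then there exist unit vectors φ, θ : Fin d × Fin d' → ℂ such that: (i) the vector τ̄ : Fin d × Fin d' × Fin 2 → ℂ defined by τ̄(i,j,1) = √p·φ(i,j) and τ̄(i,j,0) = √(1−p)·θ(i,j) is a purification of τ, i.e., Σ_{j,e} τ̄(i,j,e)·conj(τ̄(i',j,e)) = τ(i,i') for all i, i'; and (ii) the trace norm of the Hermitian matrix A on ℂ^d⊗ℂ^{d'} with entries A((i,j),(i',j')) = σ̄(i,j)·conj(σ̄(i',j')) − φ(i,j)·conj(φ(i',j')) satisfies ‖A‖₁ ≤ 2/√r. -/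
open scoped ComplexOrder

/-- The (base-2) observational divergence `D(ρ‖σ)` between two states on `ℂ^d`:
the supremum over POVM elements `M` (i.e. `M` and `I − M` positive semidefinite)
of `Re(Tr(Mρ)) · log₂(Re(Tr(Mρ)) / Re(Tr(Mσ)))` (a term with `Re(Tr(Mρ)) = 0`
contributes `0`, as does `0 * log₂(0/·) = 0` here). -/
noncomputable def obsDiv {d : ℕ} (ρ σ : Matrix (Fin d) (Fin d) ℂ) : ℝ :=
  sSup {v : ℝ | ∃ M : Matrix (Fin d) (Fin d) ℂ, M.PosSemidef ∧ (1 - M).PosSemidef ∧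
    v = (M * ρ).trace.re * Real.logb 2 ((M * ρ).trace.re / (M * σ).trace.re)}

/-- The purification `τ̄` of `τ` built from the pure states `φ` and `θ`:
`τ̄(i,j,1) = √p·φ(i,j)` and `τ̄(i,j,0) = √(1−p)·θ(i,j)`. -/
noncomputable def tauBar {d d' : ℕ} (p : ℝ) (φ θ : Fin d × Fin d' → ℂ) :
    Fin d × Fin d' × Fin 2 → ℂ :=
  fun q => if q.2.2 = 1 then (Real.sqrt p : ℂ) * φ (q.1, q.2.1)
           else (Real.sqrt (1 - p) : ℂ) * θ (q.1, q.2.1)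

open Matrix

theorem ss_exists_factor {n : Type*} [Fintype n] [DecidableEq n] {A : Matrix n n ℂ}
    (hA : A.PosSemidef) : ∃ B : Matrix n n ℂ, A = Bᴴ * B := by
  open scoped MatrixOrder in
  obtain ⟨B, hB⟩ := CStarAlgebra.nonneg_iff_eq_star_mul_self.mp (Matrix.nonneg_iff_posSemidef.mpr hA)
  exact ⟨B, hB⟩

theorem ss_exists_bound {n : Type*} [Fintype n] [DecidableEq n] {A : Matrix n n ℂ}
    (hA : A.IsHermitian) : ∃ c : ℝ, 0 < c ∧ (c • (1 : Matrix n n ℂ) - A).PosSemidef := by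
  open scoped MatrixOrder Matrix.Norms.L2Operator in
  have h := IsSelfAdjoint.le_algebraMap_norm_self (a := A) hA
  refine ⟨‖A‖ + 1, by positivity, ?_⟩
  have h2 := (Matrix.le_iff.mp h).add (PosSemidef.one (n := n) (R := ℂ))
  rw [Algebra.algebraMap_eq_smul_one] at h2
  have e : (‖A‖ + 1) • (1 : Matrix n n ℂ) - A = ‖A‖ • 1 - A + 1 := by
    rw [add_smul, one_smul]; abel
  rw [e]
  exact h2

theorem ss_trace_mul_nonneg {n : Type*} [Fintype n] [DecidableEq n] {A B : Matrix n n ℂ}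
    (hA : A.PosSemidef) (hB : B.PosSemidef) : 0 ≤ (A * B).trace.re := by
  obtain ⟨C, rfl⟩ := ss_exists_factor hA
  have := (hB.mul_mul_conjTranspose_same C).trace_nonneg
  rw [Matrix.mul_assoc, Matrix.trace_mul_comm]
  exact (Complex.nonneg_iff.mp this).1

/-- a functional nonnegative on near-accretive matrices is Hermitian -/
theorem ss_herm {n : Type*} [Fintype n] [DecidableEq n] {A Q : Matrix n n ℂ}
    (hA : A.IsHermitian)
    (h : ∀ (H : Matrix n n ℂ) (s : ℝ), 0 < s → (H + Hᴴ - s • (H * A * Hᴴ)).PosSemidef →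
      0 ≤ (Q * H).trace.re) : Q.IsHermitian := by
  have h1 : ∀ K : Matrix n n ℂ, Kᴴ = -K → 0 ≤ (Q * K).trace.re := by
    intro K hK
    have h2 : ∀ η : ℝ, 0 < η → 0 ≤ (Q * K).trace.re + η * Q.trace.re := by
      intro η hη
      obtain ⟨c, hc, hcp⟩ := ss_exists_bound (A := (K + η • 1) * A * (K + η • 1)ᴴ)
        (by
          unfold Matrix.IsHermitian
          simp [Matrix.mul_assoc, hA.eq])
      have h3 := h (K + η • 1) (2 * η / c) (by positivity) (by
        have := hcp.smul (a := (2 * η / c : ℝ)) (by positivity)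
        convert this using 1
        rw [smul_sub, smul_smul, div_mul_cancel₀ _ hc.ne']
        simp only [conjTranspose_add, conjTranspose_smul, hK, conjTranspose_one, star_trivial]
        module)
      have : (Q * (K + η • 1)).trace.re = (Q * K).trace.re + η * Q.trace.re := by
        simp [Matrix.mul_add]
      linarith
    by_contra hneg
    push Not at hneg
    set a := (Q * K).trace.re
    set b := Q.trace.re
    have hb : 0 ≤ |b| := abs_nonneg b
    have h4 := h2 (-a / (2 * (|b| + 1))) (by apply div_pos <;> linarith)
    have h5 : -a / (2 * (|b| + 1)) * b ≤ -a / 2 := by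
      rw [div_mul_eq_mul_div, div_le_div_iff₀ (by positivity) (by norm_num)]
      nlinarith [le_abs_self b]
    linarith
  have hK : (Q - Qᴴ)ᴴ = -(Q - Qᴴ) := by simp
  have e1 := h1 _ hK
  have e2 := h1 (-(Q - Qᴴ)) (by simp)
  have e3 : (Q * (Q - Qᴴ)).trace.re = 0 := by
    have : (Q * -(Q - Qᴴ)).trace.re = -(Q * (Q - Qᴴ)).trace.re := by
      rw [Matrix.mul_neg, trace_neg, Complex.neg_re]
    linarith
  have e4 : (Qᴴ * (Q - Qᴴ)).trace.re = 0 := by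
    have : (Qᴴ * (Q - Qᴴ)).trace = star ((Q - Qᴴ)ᴴ * Q).trace := by
      rw [← trace_conjTranspose]; simp
    rw [this, hK, Matrix.neg_mul, trace_neg, Matrix.trace_mul_comm]
    simp [e3]
  have e5 : ((Q - Qᴴ)ᴴ * (Q - Qᴴ)).trace = 0 := by
    have hn := (posSemidef_conjTranspose_mul_self (Q - Qᴴ)).trace_nonneg
    apply Complex.ext
    · rw [hK, Matrix.neg_mul, Matrix.sub_mul, trace_neg, trace_sub]
      simp [e3, e4]
    · exact (Complex.nonneg_iff.mp hn).2.symm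
  have := trace_conjTranspose_mul_self_eq_zero_iff.mp e5
  exact (sub_eq_zero.mp this).symm

theorem ss_opt {m n : Type*} [Fintype m] [DecidableEq m] [Fintype n] [DecidableEq n]
    {T : Matrix m m ℂ} {X W : Matrix m n ℂ} (hT : T.IsHermitian)
    (hX : (T - X * Xᴴ).PosSemidef)
    (hopt : ∀ Y : Matrix m n ℂ, (T - Y * Yᴴ).PosSemidef → (Wᴴ * (Y - X)).trace.re ≤ 0) :
    (T - X * Xᴴ) * W = 0 := by
  have hleft : (X * Wᴴ * T).IsHermitian := by
    refine ss_herm (A := T) hT fun H s hs hp => ?_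
    have h1 := hopt (X - s • (T * H * X)) (by
      have h2 := (hX.mul_mul_conjTranspose_same (1 - s • (T * H))).add
        ((hp.mul_mul_conjTranspose_same T).smul hs.le)
      convert h2 using 1
      simp only [conjTranspose_sub, conjTranspose_smul, conjTranspose_mul, conjTranspose_one,
        star_trivial, hT.eq, Matrix.mul_sub, Matrix.sub_mul, Matrix.mul_add, Matrix.add_mul,
        Matrix.mul_smul, Matrix.smul_mul, Matrix.one_mul, Matrix.mul_one, Matrix.mul_assoc,
        smul_sub, smul_add, smul_smul]
      abel)
    have e : (Wᴴ * (X - s • (T * H * X) - X)).trace = -(s • (X * Wᴴ * T * H).trace) := by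
      rw [sub_sub_cancel_left, Matrix.mul_neg, trace_neg, Matrix.mul_smul, trace_smul,
        ← Matrix.mul_assoc, Matrix.trace_mul_comm]
      simp only [Matrix.mul_assoc]
    rw [e, Complex.neg_re, Complex.smul_re, smul_eq_mul] at h1
    by_contra hc
    push Not at hc
    nlinarith
  have hright : (Wᴴ * X).IsHermitian := by
    refine ss_herm (A := 1) isHermitian_one fun H s hs hp => ?_
    have h1 := hopt (X - s • (X * H)) (by
      have h2 := hX.add ((hp.mul_mul_conjTranspose_same X).smul hs.le)
      convert h2 using 1
      simp only [conjTranspose_sub, conjTranspose_smul, conjTranspose_mul, 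
        star_trivial, Matrix.mul_sub, Matrix.sub_mul, Matrix.mul_add, Matrix.add_mul,
        Matrix.mul_smul, Matrix.smul_mul, Matrix.one_mul, Matrix.mul_one, Matrix.mul_assoc,
        smul_sub, smul_add, smul_smul]
      abel)
    have e : (Wᴴ * (X - s • (X * H) - X)).trace = -(s • (Wᴴ * X * H).trace) := by
      rw [sub_sub_cancel_left, Matrix.mul_neg, trace_neg, Matrix.mul_smul, trace_smul,
        ← Matrix.mul_assoc]
    rw [e, Complex.neg_re, Complex.smul_re, smul_eq_mul] at h1
    by_contra hc
    push Not at hc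
    nlinarith
  set N := T - X * Xᴴ with hN
  set G := W * Xᴴ with hG
  have hNG : N * G = Gᴴ * N := by
    have e1 : T * (W * Xᴴ) = X * Wᴴ * T := by
      have := hleft.eq
      simpa [conjTranspose_mul, hT.eq, Matrix.mul_assoc] using this
    have e2 : Xᴴ * W = Wᴴ * X := by
      have := hright.eq
      simpa [conjTranspose_mul] using this
    rw [hN, hG, Matrix.sub_mul, e1, conjTranspose_mul, conjTranspose_conjTranspose, Matrix.mul_sub]
    congr 1
    calc X * Xᴴ * (W * Xᴴ) = X * (Xᴴ * W) * Xᴴ := by simp only [Matrix.mul_assoc]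
      _ = _ := by rw [e2]; simp only [Matrix.mul_assoc]
  have hNh : Nᴴ = N := hX.isHermitian.eq
  obtain ⟨B, hB⟩ := ss_exists_factor hX
  obtain ⟨c₁, hc₁, hb₁⟩ := ss_exists_bound (isHermitian_mul_conjTranspose_self B)
  obtain ⟨c, hc, hb⟩ := ss_exists_bound (A := G + Gᴴ + N * W * (N * W)ᴴ)
    ((isHermitian_add_transpose_self G).add (isHermitian_mul_conjTranspose_self _))
  have hNt : (N - (1 / c₁) • (N * N)).PosSemidef := by
    have := (hb₁.conjTranspose_mul_mul_same B).smul (a := 1 / c₁) (by positivity)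
    convert this using 1
    rw [hB, Matrix.mul_sub, Matrix.sub_mul, smul_sub, Matrix.mul_smul, Matrix.smul_mul, smul_smul,
      one_div_mul_cancel hc₁.ne', one_smul, Matrix.mul_one]
    simp only [Matrix.mul_assoc]
  obtain ⟨s, hs, hs1, hsc⟩ : ∃ s : ℝ, 0 < s ∧ s ≤ 1 ∧ s * c ≤ 1 / c₁ := by
    refine ⟨min 1 (1 / c₁ / c), by positivity, min_le_left _ _, ?_⟩
    rw [← le_div_iff₀ hc]
    exact min_le_right _ _
  have hY := hopt (X + s • (N * (N * W))) (by
    have h1 := ((PosSemidef.one (n := m) (R := ℂ)).smul (a := 1 / c₁ - s * c) (by linarith)).add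
      ((hb.smul hs.le).add ((posSemidef_self_mul_conjTranspose (N * W)).smul
        (a := s - s ^ 2) (by nlinarith)))
    have h2 := hNt.add (h1.mul_mul_conjTranspose_same N)
    convert h2 using 1
    have e1 : N * (N * (W * Xᴴ)) = N * (Gᴴ * N) := by rw [← hNG]
    have e2 : X * (Wᴴ * (N * N)) = N * (G * N) := by
      rw [← Matrix.mul_assoc, ← Matrix.mul_assoc, ← Matrix.mul_assoc, hNG, hG,
        conjTranspose_mul, conjTranspose_conjTranspose]
    have e0 : T = N + X * Xᴴ := by rw [hN]; abel
    rw [e0]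
    simp only [conjTranspose_add, conjTranspose_smul, conjTranspose_mul,
        star_trivial, hNh, Matrix.mul_sub, Matrix.sub_mul, Matrix.mul_add, Matrix.add_mul,
        Matrix.mul_smul, Matrix.smul_mul, Matrix.one_mul, Matrix.mul_one, Matrix.mul_assoc,
        smul_sub, smul_add, smul_smul, sub_smul, e1, e2]
    rw [pow_two]
    abel)
  have e : (Wᴴ * (X + s • (N * (N * W)) - X)).trace = s • ((N * W)ᴴ * (N * W)).trace := by
    rw [add_sub_cancel_left, Matrix.mul_smul, trace_smul, conjTranspose_mul, hNh]
    simp only [Matrix.mul_assoc]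
  have hn := Complex.nonneg_iff.mp (posSemidef_conjTranspose_mul_self (N * W)).trace_nonneg
  rw [e, Complex.smul_re, smul_eq_mul] at hY
  apply trace_conjTranspose_mul_self_eq_zero_iff.mp
  apply Complex.ext
  · rw [Complex.zero_re]
    by_contra hne
    have : 0 < ((N * W)ᴴ * (N * W)).trace.re := lt_of_le_of_ne hn.1 (Ne.symm hne)
    nlinarith
  · exact hn.2.symm

/-- Euclidean vectorisation -/
noncomputable def ssVec {m n : Type*} [Fintype m] [Fintype n] (X : Matrix m n ℂ) :
    EuclideanSpace ℂ (m × n) := WithLp.toLp 2 fun q => X q.1 q.2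

noncomputable def ssMat {m n : Type*} [Fintype m] [Fintype n] (x : EuclideanSpace ℂ (m × n)) :
    Matrix m n ℂ := Matrix.of fun i j => x (i, j)

theorem ss_feasible_iff {m n : Type*} [Fintype m] [DecidableEq m] [Fintype n] [DecidableEq n]
    {T : Matrix m m ℂ} (hT : T.PosSemidef) (X : Matrix m n ℂ) :
    (T - X * Xᴴ).PosSemidef ↔
      ∀ v : m → ℂ, ‖WithLp.toLp 2 (star v ᵥ* X)‖ ≤ √((star v ⬝ᵥ (T *ᵥ v)).re) := by
  have key : ∀ v : m → ℂ, star v ⬝ᵥ ((T - X * Xᴴ) *ᵥ v) =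
      star v ⬝ᵥ (T *ᵥ v) - ((‖WithLp.toLp 2 (star v ᵥ* X)‖ ^ 2 : ℝ) : ℂ) := by
    intro v
    rw [Matrix.sub_mulVec, dotProduct_sub]
    congr 1
    rw [EuclideanSpace.norm_sq_eq, ← Matrix.mulVec_mulVec, dotProduct_mulVec]
    have : Xᴴ *ᵥ v = star (star v ᵥ* X) := by
      rw [star_vecMul, star_star]
    rw [this, dotProduct]
    push_cast
    refine Finset.sum_congr rfl fun j _ => ?_
    simp only [Pi.star_apply]
    rw [← Complex.mul_conj']
    rfl
  rw [posSemidef_iff_dotProduct_mulVec]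
  constructor
  · rintro ⟨-, h⟩ v
    have := (Complex.nonneg_iff.mp (h v)).1
    rw [key, Complex.sub_re, Complex.ofReal_re] at this
    apply Real.le_sqrt_of_sq_le
    linarith
  · intro h
    refine ⟨hT.isHermitian.sub (isHermitian_mul_conjTranspose_self X), fun v => ?_⟩
    have h0 := Complex.nonneg_iff.mp (hT.dotProduct_mulVec_nonneg v)
    rw [key, Complex.nonneg_iff, Complex.sub_re, Complex.ofReal_re, Complex.sub_im,
      Complex.ofReal_im, ← h0.2]
    refine ⟨?_, by simp⟩
    have := (Real.le_sqrt (norm_nonneg _) h0.1).mp (h v)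
    linarith

theorem ss_proj {m n : Type*} [Fintype m] [DecidableEq m] [Fintype n] [DecidableEq n]
    {T : Matrix m m ℂ} (hT : T.PosSemidef) (S : Matrix m n ℂ) :
    ∃ X : Matrix m n ℂ, (T - X * Xᴴ).PosSemidef ∧
      ∀ Y : Matrix m n ℂ, (T - Y * Yᴴ).PosSemidef → ((S - X)ᴴ * (Y - X)).trace.re ≤ 0 := by
  letI : InnerProductSpace ℝ (EuclideanSpace ℂ (m × n)) := InnerProductSpace.rclikeToReal ℂ _
  let ℓ : (m → ℂ) → EuclideanSpace ℂ (m × n) →ₗ[ℝ] EuclideanSpace ℂ n := fun v =>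
    { toFun := fun x => WithLp.toLp 2 (star v ᵥ* ssMat x)
      map_add' := by
        intro x y
        ext j
        simp [ssMat, vecMul, dotProduct, mul_add, Finset.sum_add_distrib]
      map_smul' := by
        intro c x
        ext j
        simp [ssMat, vecMul, dotProduct, Finset.mul_sum, mul_left_comm] }
  let C : Set (EuclideanSpace ℂ (m × n)) := {x | (T - ssMat x * (ssMat x)ᴴ).PosSemidef}
  have hC : C = ⋂ v : m → ℂ, ℓ v ⁻¹' (Metric.closedBall 0 (√((star v ⬝ᵥ (T *ᵥ v)).re))) := by
    ext x
    simp only [C, Set.mem_setOf_eq, ss_feasible_iff hT, Set.mem_iInter, Set.mem_preimage,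
      mem_closedBall_zero_iff]
    rfl
  have hne : C.Nonempty := ⟨0, by
    have : ssMat (0 : EuclideanSpace ℂ (m × n)) = 0 := by ext; simp [ssMat]
    simp [C, this, hT]⟩
  have hconv : Convex ℝ C := by
    rw [hC]
    exact convex_iInter fun v => (convex_closedBall _ _).linear_preimage (ℓ v)
  have hclosed : IsClosed C := by
    rw [hC]
    exact isClosed_iInter fun v => Metric.isClosed_closedBall.preimage
      (LinearMap.continuous_of_finiteDimensional (ℓ v))
  obtain ⟨x, hx, hmin⟩ := exists_norm_eq_iInf_of_complete_convex hne hclosed.isComplete hconv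
    (ssVec S)
  have hvar := (norm_eq_iInf_iff_real_inner_le_zero hconv hx).mp hmin
  refine ⟨ssMat x, hx, fun Y hY => ?_⟩
  have h1 := hvar (ssVec Y) (by exact hY)
  convert h1 using 1
  change _ = (inner ℂ (ssVec S - x) (ssVec Y - x)).re
  congr 1
  simp only [PiLp.inner_apply, Matrix.trace, Matrix.diag, Matrix.mul_apply, 
    Fintype.sum_prod_type_right]
  refine Finset.sum_congr rfl fun j _ => Finset.sum_congr rfl fun i _ => ?_
  simp [ssVec, ssMat, mul_comm]

theorem ss_kerproj {m n : Type*} [Fintype m] [DecidableEq m] [Fintype n] [DecidableEq n]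
    {N : Matrix m m ℂ} (hN : N.IsHermitian) :
    ∃ P : Matrix m m ℂ, Pᴴ = P ∧ P * P = P ∧ N * P = 0 ∧
      ∀ W : Matrix m n ℂ, N * W = 0 → P * W = W := by
  have hs := hN.spectral_theorem
  rw [Unitary.conjStarAlgAut_apply] at hs
  set U : Matrix m m ℂ := (hN.eigenvectorUnitary : Matrix m m ℂ) with hU
  have hUU : Uᴴ * U = 1 := Unitary.coe_star_mul_self hN.eigenvectorUnitary
  have hUU' : U * Uᴴ = 1 := Unitary.coe_mul_star_self hN.eigenvectorUnitary
  change N = U * diagonal (fun i => ((hN.eigenvalues i : ℝ) : ℂ)) * Uᴴ at hs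
  set Λ := fun i => ((hN.eigenvalues i : ℝ) : ℂ)
  let δ : m → ℂ := fun i => if Λ i = 0 then 1 else 0
  refine ⟨U * diagonal δ * Uᴴ, ?_, ?_, ?_, ?_⟩
  · have : star δ = δ := by
      ext i; simp only [δ, Pi.star_apply]; split_ifs <;> simp
    simp [Matrix.mul_assoc, diagonal_conjTranspose, this]
  · have : U * diagonal δ * Uᴴ * (U * diagonal δ * Uᴴ) =
        U * (diagonal δ * ((Uᴴ * U) * diagonal δ)) * Uᴴ := by simp only [Matrix.mul_assoc]
    rw [this, hUU, Matrix.one_mul, diagonal_mul_diagonal]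
    congr 3
    ext i; simp only [δ]; split_ifs <;> simp
  · have : N * (U * diagonal δ * Uᴴ) =
        U * (diagonal Λ * ((Uᴴ * U) * diagonal δ)) * Uᴴ := by
      conv_lhs => rw [hs]
      simp only [Matrix.mul_assoc]
    rw [this, hUU, Matrix.one_mul, diagonal_mul_diagonal]
    have : (fun i => Λ i * δ i) = 0 := by
      ext i; simp only [δ]; split_ifs with h <;> simp [h]
    rw [this]
    simp
  · intro W hW
    have h1 : diagonal Λ * (Uᴴ * W) = 0 := by
      have : Uᴴ * (N * W) = (Uᴴ * U) * (diagonal Λ * (Uᴴ * W)) := by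
        conv_lhs => rw [hs]
        simp only [Matrix.mul_assoc]
      rw [hW, hUU, Matrix.one_mul, Matrix.mul_zero] at this
      exact this.symm
    have h2 : diagonal δ * (Uᴴ * W) = Uᴴ * W := by
      ext i j
      have := congrFun (congrFun h1 i) j
      rw [diagonal_mul] at this ⊢
      simp only [δ]
      split_ifs with h
      · simp
      · rcases mul_eq_zero.mp this with h' | h'
        · exact absurd h' h
        · rw [h']; simp
    rw [Matrix.mul_assoc, Matrix.mul_assoc, h2, ← Matrix.mul_assoc, hUU', Matrix.one_mul]

theorem ss_tracenorm {n : Type*} [Fintype n] [DecidableEq n] (s f : n → ℂ)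
    (hs : ∑ q, ‖s q‖ ^ 2 = 1) (hf : ∑ q, ‖f q‖ ^ 2 = 1) (ε : ℝ)
    (hε : 1 - ε ≤ ‖∑ q, starRingEnd ℂ (s q) * f q‖ ^ 2)
    (hA : (Matrix.of fun q q' : n =>
          s q * starRingEnd ℂ (s q') - f q * starRingEnd ℂ (f q')).IsHermitian) :
    ∑ q, |hA.eigenvalues q| ≤ 2 * √ε := by
  set A : Matrix n n ℂ := Matrix.of fun q q' : n =>
          s q * starRingEnd ℂ (s q') - f q * starRingEnd ℂ (f q') with hAdef
  have hA' : A = vecMulVec s (star s) + vecMulVec (-f) (star f) := by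
    ext i j; simp [hAdef, vecMulVec_apply]; ring
  have hrank : A.rank ≤ 2 := by
    have : A = (Matrix.of fun (q : n) (e : Fin 2) => if e = 0 then s q else -f q) *
        (Matrix.of fun (e : Fin 2) (q : n) =>
          if e = 0 then starRingEnd ℂ (s q) else starRingEnd ℂ (f q)) := by
      ext i j; simp [hAdef, Matrix.mul_apply, Fin.sum_univ_two]; ring
    rw [this]
    refine (rank_mul_le_left _ _).trans ((rank_le_card_width _).trans ?_)
    simp
  have hsq : ∑ q, hA.eigenvalues q ^ 2 = (A * A).trace.re := by
    have hs := hA.spectral_theorem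
    rw [Unitary.conjStarAlgAut_apply] at hs
    set U : Matrix n n ℂ := (hA.eigenvectorUnitary : Matrix n n ℂ) with hU
    have hUU : Uᴴ * U = 1 := Unitary.coe_star_mul_self hA.eigenvectorUnitary
    change A = U * diagonal (fun i => ((hA.eigenvalues i : ℝ) : ℂ)) * Uᴴ at hs
    set Λ := fun i => ((hA.eigenvalues i : ℝ) : ℂ) with hΛ
    have : A * A = U * (diagonal Λ * (Uᴴ * U) * diagonal Λ) * Uᴴ := by
      conv_lhs => rw [hs]
      simp only [Matrix.mul_assoc]
    rw [this, Matrix.mul_assoc, Matrix.trace_mul_comm, Matrix.mul_assoc, hUU, Matrix.mul_one,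
      Matrix.mul_one, diagonal_mul_diagonal, trace_diagonal]
    simp [hΛ, pow_two]
  have htr : (A * A).trace.re = 2 - 2 * ‖∑ q, starRingEnd ℂ (s q) * f q‖ ^ 2 := by
    have d1 : star s ⬝ᵥ s = 1 := by
      have : star s ⬝ᵥ s = ((∑ q, ‖s q‖ ^ 2 : ℝ) : ℂ) := by
        simp [dotProduct, ← Complex.conj_mul']
      rw [this, hs]; simp
    have d2 : star f ⬝ᵥ f = 1 := by
      have : star f ⬝ᵥ f = ((∑ q, ‖f q‖ ^ 2 : ℝ) : ℂ) := by
        simp [dotProduct, ← Complex.conj_mul']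
      rw [this, hf]; simp
    have d3 : star s ⬝ᵥ f = ∑ q, starRingEnd ℂ (s q) * f q := by simp [dotProduct]
    have d4 : star f ⬝ᵥ s = starRingEnd ℂ (star s ⬝ᵥ f) := by
      simp [dotProduct, mul_comm]
    rw [hA', ← d3]
    have : ((vecMulVec s (star s) + vecMulVec (-f) (star f)) *
      (vecMulVec s (star s) + vecMulVec (-f) (star f))).trace =
        2 - 2 * (star s ⬝ᵥ f * starRingEnd ℂ (star s ⬝ᵥ f)) := by
      simp only [Matrix.add_mul, Matrix.mul_add, vecMulVec_mul_vecMulVec, trace_add,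
        trace_smul, trace_vecMulVec, smul_dotProduct, dotProduct_smul, d1, d2, d4,
        neg_dotProduct, dotProduct_neg, dotProduct_comm s (star s), dotProduct_comm f (star f),
        dotProduct_comm f (star s), dotProduct_comm s (star f), smul_eq_mul]
      ring
    rw [this, Complex.mul_conj']
    norm_cast
  classical
  set F := Finset.univ.filter fun q => hA.eigenvalues q ≠ 0 with hF
  have hcard : (F.card : ℝ) ≤ 2 := by
    have := hA.rank_eq_card_non_zero_eigs
    rw [Fintype.card_subtype] at this
    rw [hF, ← this]
    exact_mod_cast hrank
  have e1 : ∑ q, |hA.eigenvalues q| = ∑ q ∈ F, |hA.eigenvalues q| := by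
    rw [hF, Finset.sum_filter]
    refine Finset.sum_congr rfl fun q _ => ?_
    split_ifs with h
    · rfl
    · push Not at h; simp [h]
  have e2 : (∑ q, |hA.eigenvalues q|) ^ 2 ≤ 4 * ε := by
    calc (∑ q, |hA.eigenvalues q|) ^ 2 ≤ F.card * ∑ q ∈ F, |hA.eigenvalues q| ^ 2 := by
          rw [e1]; exact sq_sum_le_card_mul_sum_sq
      _ ≤ 2 * ∑ q, hA.eigenvalues q ^ 2 := by
          simp only [sq_abs]
          apply mul_le_mul hcard _ (Finset.sum_nonneg fun _ _ => sq_nonneg _) (by norm_num)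
          exact Finset.sum_le_univ_sum_of_nonneg fun _ => sq_nonneg _
      _ ≤ 4 * ε := by rw [hsq, htr]; linarith
  have e3 : ∑ q, |hA.eigenvalues q| ≤ √(4 * ε) := Real.le_sqrt_of_sq_le e2
  rwa [Real.sqrt_mul (by norm_num), show (4 : ℝ) = 2 ^ 2 by norm_num, Real.sqrt_sq (by norm_num)] at e3

theorem ss_dominate {n : Type*} [Fintype n] [DecidableEq n] {σ τ : Matrix n n ℂ}
    (hσ : σ.PosSemidef) (hτ : τ.PosDef) :
    ∃ l : ℝ, 0 < l ∧ (τ - l • σ).PosSemidef := by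
  obtain ⟨B, hB⟩ := ss_exists_factor hτ.posSemidef
  have hu : IsUnit B := by
    have h := hτ.isUnit
    rw [hB] at h
    rw [Matrix.isUnit_iff_isUnit_det] at h ⊢
    rw [det_mul] at h
    exact isUnit_of_mul_isUnit_right h
  have hdet : IsUnit B.det := (Matrix.isUnit_iff_isUnit_det B).mp hu
  have hBB : B⁻¹ * B = 1 := Matrix.nonsing_inv_mul B hdet
  have hBB' : Bᴴ * B⁻¹ᴴ = 1 := by rw [← conjTranspose_mul, hBB, conjTranspose_one]
  obtain ⟨c, hc, hp⟩ := ss_exists_bound (hσ.conjTranspose_mul_mul_same B⁻¹).isHermitian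
  refine ⟨1 / c, by positivity, ?_⟩
  have h := (hp.conjTranspose_mul_mul_same B).smul (a := 1 / c) (by positivity)
  convert h using 1
  have e : Bᴴ * (B⁻¹ᴴ * σ * B⁻¹) * B = σ := by
    calc Bᴴ * (B⁻¹ᴴ * σ * B⁻¹) * B = (Bᴴ * B⁻¹ᴴ) * σ * (B⁻¹ * B) := by
          simp only [Matrix.mul_assoc]
      _ = σ := by rw [hBB, hBB']; simp
  rw [Matrix.mul_sub, Matrix.sub_mul, e, smul_sub, Matrix.mul_smul, Matrix.smul_mul, smul_smul,
      one_div_mul_cancel hc.ne', one_smul, Matrix.mul_one, hB]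

theorem ss_le_obsDiv {d : ℕ} {σ τ : Matrix (Fin d) (Fin d) ℂ}
    (hσ : σ.PosSemidef) (hσtr : σ.trace = 1) (hτ : τ.PosDef)
    {M : Matrix (Fin d) (Fin d) ℂ} (hM : M.PosSemidef) (hM' : (1 - M).PosSemidef) :
    (M * σ).trace.re * Real.logb 2 ((M * σ).trace.re / (M * τ).trace.re) ≤ obsDiv σ τ := by
  obtain ⟨l, hl, hp⟩ := ss_dominate hσ hτ
  refine le_csSup ⟨|Real.logb 2 (1 / l)|, ?_⟩ ⟨M, hM, hM', rfl⟩
  rintro v ⟨L, hL, hL', rfl⟩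
  have h0 := ss_trace_mul_nonneg hL hσ
  have h1 := ss_trace_mul_nonneg hL' hσ
  have h2 := ss_trace_mul_nonneg hL hp
  rw [Matrix.sub_mul, trace_sub, Matrix.one_mul, hσtr, Complex.sub_re, Complex.one_re] at h1
  rw [Matrix.mul_sub, trace_sub, Matrix.mul_smul, trace_smul, Complex.sub_re, Complex.smul_re,
    smul_eq_mul] at h2
  set a := (L * σ).trace.re
  set b := (L * τ).trace.re
  rcases h0.eq_or_lt with h | h
  · rw [← h]; simp
  · have hb : 0 < b := by nlinarith
    have : a / b ≤ 1 / l := by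
      rw [div_le_div_iff₀ hb hl]; nlinarith
    have h3 : Real.logb 2 (a / b) ≤ Real.logb 2 (1 / l) :=
      Real.logb_le_logb_of_le (by norm_num) (by positivity) this
    have h4 := h3.trans (le_abs_self _)
    nlinarith [abs_nonneg (Real.logb 2 (1 / l))]

theorem ss_core {d d' : ℕ} {σ τ : Matrix (Fin d) (Fin d) ℂ}
    (hσ : σ.PosSemidef) (hσtr : σ.trace = 1) (hτ : τ.PosDef)
    (S : Matrix (Fin d) (Fin d') ℂ) (hS : S * Sᴴ = σ) (r k : ℝ) (hr : 1 < r) (hk : 0 < k)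
    (hkD : obsDiv σ τ ≤ k) :
    ∃ X : Matrix (Fin d) (Fin d') ℂ, (((2 : ℝ) ^ (r * k)) • τ - X * Xᴴ).PosSemidef ∧
      1 - 1 / r ≤ (Xᴴ * X).trace.re ∧ (Xᴴ * X).trace.re ≤ (Sᴴ * X).trace.re := by
  set K : ℝ := (2 : ℝ) ^ (r * k) with hK
  have hKpos : 0 < K := by positivity
  have hT : (K • τ).PosSemidef := hτ.posSemidef.smul hKpos.le
  obtain ⟨X, hX, hopt⟩ := ss_proj hT S
  have hNW := ss_opt hT.isHermitian hX hopt
  set W := S - X with hW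
  obtain ⟨P, hPh, hPP, hNP, hPW⟩ := ss_kerproj (n := Fin d') hX.isHermitian
  have hPW := hPW W hNW
  have hP : P.PosSemidef := by
    have := posSemidef_conjTranspose_mul_self P
    rwa [hPh, hPP] at this
  have hRR : (1 - P)ᴴ * (1 - P) = 1 - P := by
    rw [conjTranspose_sub, conjTranspose_one, hPh, Matrix.mul_sub, Matrix.sub_mul, Matrix.sub_mul, hPP]
    simp
  have hP' : (1 - P).PosSemidef := by
    have := posSemidef_conjTranspose_mul_self (1 - P)
    rwa [hRR] at this
  have f1 : 0 ≤ (Wᴴ * X).trace.re := by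
    have := hopt 0 (by simpa using hT)
    rw [zero_sub, Matrix.mul_neg, trace_neg, Complex.neg_re] at this
    linarith
  have hSX : S = X + W := by rw [hW]; abel
  have f2 : (P * (X * Xᴴ)).trace.re = K * (P * τ).trace.re := by
    have h1 : ((K • τ - X * Xᴴ) * P).trace = 0 := by rw [hNP, trace_zero]
    rw [Matrix.trace_mul_comm, Matrix.mul_sub, trace_sub, sub_eq_zero, Matrix.mul_smul,
      trace_smul] at h1
    rw [← h1, Complex.smul_re, smul_eq_mul]
  have f3 : (P * σ).trace = (P * (X * Xᴴ)).trace + (Wᴴ * X).trace + star (Wᴴ * X).trace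
      + (Wᴴ * W).trace := by
    have hWP : Wᴴ * P = Wᴴ := by
      have := congrArg conjTranspose hPW
      rwa [conjTranspose_mul, hPh] at this
    have e1 : (P * (X * Wᴴ)).trace = (Wᴴ * X).trace := by
      rw [Matrix.trace_mul_comm, Matrix.mul_assoc, hWP, Matrix.trace_mul_comm]
    have e2 : (P * (W * Xᴴ)).trace = star (Wᴴ * X).trace := by
      rw [← Matrix.mul_assoc, hPW, Matrix.trace_mul_comm, ← trace_conjTranspose]
      simp
    have e3 : (P * (W * Wᴴ)).trace = (Wᴴ * W).trace := by
      rw [← Matrix.mul_assoc, hPW, Matrix.trace_mul_comm]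
    rw [← hS, hSX, conjTranspose_add, Matrix.add_mul, Matrix.mul_add, Matrix.mul_add,
      Matrix.mul_add, Matrix.mul_add, Matrix.mul_add, trace_add, trace_add, trace_add, e1, e2, e3]
    ring
  have f4 : 0 ≤ (Wᴴ * W).trace.re :=
    (Complex.nonneg_iff.mp (posSemidef_conjTranspose_mul_self W).trace_nonneg).1
  have f5 : K * (P * τ).trace.re ≤ (P * σ).trace.re := by
    rw [f3, ← f2]
    simp only [Complex.add_re, Complex.star_def, Complex.conj_re]
    linarith
  have f6 : (P * σ).trace.re ≤ 1 / r := by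
    have hD := (ss_le_obsDiv hσ hσtr hτ hP hP').trans hkD
    have ha := ss_trace_mul_nonneg hP hσ
    have hb := ss_trace_mul_nonneg hP hτ.posSemidef
    obtain ⟨l, hl, hp⟩ := ss_dominate hσ hτ
    have h2 := ss_trace_mul_nonneg hP hp
    rw [Matrix.mul_sub, trace_sub, Matrix.mul_smul, trace_smul, Complex.sub_re, Complex.smul_re,
      smul_eq_mul] at h2
    set a := (P * σ).trace.re
    set b := (P * τ).trace.re
    rcases ha.eq_or_lt with h | h
    · rw [← h]; positivity
    · have hb : 0 < b := by nlinarith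
      have h3 : r * k ≤ Real.logb 2 (a / b) := by
        rw [Real.le_logb_iff_rpow_le (by norm_num) (by positivity), le_div_iff₀ hb]
        exact f5
      rw [le_div_iff₀ (by linarith)]
      have h4 : a * (r * k) ≤ k := (mul_le_mul_of_nonneg_left h3 ha).trans hD
      by_contra hc
      push Not at hc
      nlinarith
  have f7 : ((1 - P) * σ).trace.re = ((1 - P) * (X * Xᴴ)).trace.re := by
    have hRS : (1 - P) * S = (1 - P) * X := by
      rw [hSX, Matrix.mul_add, Matrix.sub_mul 1 P W, hPW]
      simp
    have g : ∀ Z : Matrix (Fin d) (Fin d') ℂ, ((1 - P) * (Z * Zᴴ)).trace =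
        (((1 - P) * Z) * ((1 - P) * Z)ᴴ).trace := by
      intro Z
      rw [conjTranspose_mul, Matrix.trace_mul_comm ((1 - P) * Z), Matrix.mul_assoc,
        ← Matrix.mul_assoc _ _ Z, hRR, ← Matrix.mul_assoc, Matrix.trace_mul_comm,
        ← Matrix.mul_assoc, Matrix.trace_mul_comm]
    rw [← hS, g, g, hRS]
  refine ⟨X, hX, ?_, ?_⟩
  · have g1 := ss_trace_mul_nonneg hP (posSemidef_self_mul_conjTranspose X)
    rw [Matrix.sub_mul, Matrix.sub_mul, trace_sub, trace_sub, Matrix.one_mul, Matrix.one_mul,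
      hσtr, Complex.sub_re, Complex.sub_re, Complex.one_re] at f7
    rw [Matrix.trace_mul_comm]
    linarith
  · rw [hSX, conjTranspose_add, Matrix.add_mul, trace_add, Complex.add_re]
    linarith

/-- **Substate theorem** (Jain, Radhakrishnan, Sen). -/
theorem substate_theorem (d d' : ℕ) (hd : 0 < d) (hdd' : d ≤ d')
    (σ τ : Matrix (Fin d) (Fin d) ℂ)
    (hσ : σ.PosSemidef) (hσtr : σ.trace = 1)
    (hτ : τ.PosDef) (hτtr : τ.trace = 1)
    (σbar : Fin d × Fin d' → ℂ) (hσbar_unit : ∑ q, ‖σbar q‖ ^ 2 = 1)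
    (hσbar_pur : ∀ i i' : Fin d,
      ∑ j : Fin d', σbar (i, j) * starRingEnd ℂ (σbar (i', j)) = σ i i')
    (r : ℝ) (hr : 1 < r)
    (k : ℝ) (hk : k = obsDiv σ τ + 6 * Real.sqrt (obsDiv σ τ + 1) + 4)
    (p : ℝ) (hp : p = (r - 1) / (r * (2 : ℝ) ^ (r * k))) :
    ∃ φ θ : Fin d × Fin d' → ℂ,
      (∑ q, ‖φ q‖ ^ 2 = 1) ∧ (∑ q, ‖θ q‖ ^ 2 = 1) ∧
      (∀ i i' : Fin d,
        ∑ j : Fin d', ∑ e : Fin 2,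
          tauBar p φ θ (i, j, e) * starRingEnd ℂ (tauBar p φ θ (i', j, e)) = τ i i') ∧
      ∃ hA : (Matrix.of fun q q' : Fin d × Fin d' =>
          σbar q * starRingEnd ℂ (σbar q') - φ q * starRingEnd ℂ (φ q')).IsHermitian,
        ∑ q, |hA.eigenvalues q| ≤ 2 / Real.sqrt r := by
  set D := obsDiv σ τ with hD
  have hD0 : 0 ≤ D := by
    have := ss_le_obsDiv hσ hσtr hτ (M := 0) PosSemidef.zero (by simpa using PosSemidef.one)
    simpa using this
  have hsq : 0 ≤ √(D + 1) := Real.sqrt_nonneg _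
  have hk0 : 0 < k := by rw [hk]; linarith
  have hkD : D ≤ k := by rw [hk]; linarith
  let S : Matrix (Fin d) (Fin d') ℂ := Matrix.of fun i j => σbar (i, j)
  have hS : S * Sᴴ = σ := by
    ext i i'
    rw [← hσbar_pur i i', Matrix.mul_apply]
    rfl
  obtain ⟨X, hX, hx, hSX⟩ := ss_core hσ hσtr hτ S hS r k hr hk0 hkD
  set K : ℝ := (2 : ℝ) ^ (r * k) with hK
  have hK1 : 1 ≤ K := Real.one_le_rpow (by norm_num) (by positivity)
  set x := (Xᴴ * X).trace.re with hxdef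
  have hr0 : 0 < r := by linarith
  have hr1 : 0 < 1 - 1 / r := by
    rw [sub_pos, div_lt_one hr0]; exact hr
  have hx0 : 0 < x := by linarith
  have hpK : p * K = 1 - 1 / r := by
    rw [hp]; field_simp
  have hp0 : 0 < p := by
    rw [hp]; apply div_pos <;> [linarith; positivity]
  have hp1 : p < 1 := by
    have : 0 < 1 / r := by positivity
    nlinarith
  have hsum : ∀ Z : Matrix (Fin d) (Fin d') ℂ,
      ((∑ q : Fin d × Fin d', ‖Z q.1 q.2‖ ^ 2 : ℝ) : ℂ) = (Z * Zᴴ).trace := by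
    intro Z
    simp only [Matrix.trace, Matrix.diag, Matrix.mul_apply, Fintype.sum_prod_type,
      conjTranspose_apply]
    push_cast
    refine Finset.sum_congr rfl fun i _ => Finset.sum_congr rfl fun j _ => ?_
    rw [← Complex.mul_conj']
    rfl
  have hxx : (X * Xᴴ).trace = (x : ℂ) := by
    rw [← hsum, hxdef, Matrix.trace_mul_comm, ← hsum, Complex.ofReal_re]
  let Φ : Matrix (Fin d) (Fin d') ℂ := (1 / √x) • X
  have hsx : 0 < √x := Real.sqrt_pos.mpr hx0
  have hΦ : Φ * Φᴴ = (1 / x) • (X * Xᴴ) := by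
    simp only [Φ, conjTranspose_smul, star_trivial, Matrix.smul_mul, Matrix.mul_smul, smul_smul]
    congr 1
    rw [div_mul_div_comm, Real.mul_self_sqrt hx0.le, one_mul]
  have hΦtr : (Φ * Φᴴ).trace = 1 := by
    rw [hΦ, trace_smul, hxx, Complex.real_smul, ← Complex.ofReal_mul, one_div_mul_cancel hx0.ne',
      Complex.ofReal_one]
  have hR : (τ - p • (Φ * Φᴴ)).PosSemidef := by
    have h1 : 0 ≤ 1 - p * K / x := by
      rw [sub_nonneg, div_le_one hx0, hpK]; exact hx
    have := (hτ.posSemidef.smul h1).add (hX.smul (a := p / x) (by positivity))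
    convert this using 1
    rw [hΦ, smul_sub, smul_smul, smul_smul, sub_smul, one_smul]
    rw [show p * K / x = p / x * K by ring, show p * (1 / x) = p / x by ring]
    abel
  have h1p : 0 < 1 - p := by linarith
  obtain ⟨B, hB⟩ := ss_exists_factor (hR.smul (a := 1 / (1 - p)) (by positivity))
  let E : Matrix (Fin d) (Fin d') ℂ := Matrix.of fun i j => if Fin.castLE hdd' i = j then 1 else 0
  have hE : E * Eᴴ = 1 := by
    ext i i'
    simp [E, Matrix.mul_apply, Matrix.one_apply, eq_comm]
  let Θ : Matrix (Fin d) (Fin d') ℂ := Bᴴ * E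
  have hΘ : Θ * Θᴴ = (1 / (1 - p)) • (τ - p • (Φ * Φᴴ)) := by
    rw [hB]
    simp only [Θ, conjTranspose_mul, conjTranspose_conjTranspose]
    rw [Matrix.mul_assoc, ← Matrix.mul_assoc E, hE, Matrix.one_mul]
  have hΘtr : (Θ * Θᴴ).trace = 1 := by
    rw [hΘ, trace_smul, trace_sub, trace_smul, hΦtr, hτtr]
    have : (1 : ℂ) - p ≠ 0 := by exact_mod_cast h1p.ne'
    simp only [Complex.real_smul]
    push_cast
    field_simp
  have hpur : (1 - p) • (Θ * Θᴴ) + p • (Φ * Φᴴ) = τ := by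
    rw [hΘ, smul_smul, mul_one_div_cancel h1p.ne', one_smul]
    abel
  have hΦn : ∑ q : Fin d × Fin d', ‖Φ q.1 q.2‖ ^ 2 = 1 := by
    have := (hsum Φ).trans hΦtr
    exact_mod_cast this
  have hΘn : ∑ q : Fin d × Fin d', ‖Θ q.1 q.2‖ ^ 2 = 1 := by
    have := (hsum Θ).trans hΘtr
    exact_mod_cast this
  refine ⟨fun q => Φ q.1 q.2, fun q => Θ q.1 q.2, hΦn, hΘn, ?_, ?_⟩
  · intro i i'
    have h := congrFun (congrFun hpur i) i'
    rw [← h]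
    simp only [Matrix.add_apply, Matrix.smul_apply, Matrix.mul_apply, Finset.smul_sum,
      ← Finset.sum_add_distrib, Fin.sum_univ_two]
    refine Finset.sum_congr rfl fun j _ => ?_
    have s1 : ((√(1 - p) : ℝ) : ℂ) * ((√(1 - p) : ℝ) : ℂ) = ((1 - p : ℝ) : ℂ) := by
      rw [← Complex.ofReal_mul, Real.mul_self_sqrt h1p.le]
    have s2 : ((√p : ℝ) : ℂ) * ((√p : ℝ) : ℂ) = (p : ℂ) := by
      rw [← Complex.ofReal_mul, Real.mul_self_sqrt hp0.le]
    simp only [tauBar, conjTranspose_apply, Complex.real_smul, if_true, zero_ne_one, if_false,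
      map_mul, Complex.conj_ofReal, ← s1, ← s2, Complex.star_def]
    ring
  · have hA : (Matrix.of fun q q' : Fin d × Fin d' =>
          σbar q * starRingEnd ℂ (σbar q') -
            (fun q : Fin d × Fin d' => Φ q.1 q.2) q *
              starRingEnd ℂ ((fun q : Fin d × Fin d' => Φ q.1 q.2) q')).IsHermitian := by
      ext i j
      simp [mul_comm]
    refine ⟨hA, ?_⟩
    have hfin := ss_tracenorm σbar (fun q => Φ q.1 q.2) hσbar_unit hΦn (1 / r) ?_ hA
    · refine hfin.trans_eq ?_
      rw [Real.sqrt_div zero_le_one, Real.sqrt_one]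
      ring
    · have e1 : ∑ q : Fin d × Fin d', starRingEnd ℂ (σbar q) * Φ q.1 q.2 = (Sᴴ * Φ).trace := by
        simp only [Matrix.trace, Matrix.diag, Matrix.mul_apply, Fintype.sum_prod_type_right,
          conjTranspose_apply]
        rfl
      rw [e1]
      have e2 : √x ≤ (Sᴴ * Φ).trace.re := by
        simp only [Φ]
        rw [Matrix.mul_smul, trace_smul, Complex.smul_re, smul_eq_mul, one_div_mul_eq_div,
          le_div_iff₀ hsx, Real.mul_self_sqrt hx0.le]
        exact hSX
      have e3 : √x ≤ ‖(Sᴴ * Φ).trace‖ := e2.trans (Complex.re_le_norm _)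
      calc 1 - 1 / r ≤ x := hx
        _ = √x ^ 2 := (Real.sq_sqrt hx0.le).symm
        _ ≤ _ := by gcongr
end

section
/- (Local transition theorem.) Let h, k be positive integers and let ρ be a density matrix on ℂ^k. Let φ₁, φ₂ : Fin h × Fin k → ℂ be two unit vectors in ℂ^h⊗ℂ^k that both purify ρ, i.e., for a = 1, 2 and all j, j' ∈ Fin k, Σ_{i∈Fin h} φ_a(i,j)·conj(φ_a(i,j')) = ρ(j,j'). Then there exists a unitary h×h complex matrix U such that for all i ∈ Fin h and j ∈ Fin k, Σ_{i'∈Fin h} U(i,i')·φ₁(i',j) = φ₂(i,j), i.e., (U ⊗ I)φ₁ = φ₂. -/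
open scoped ComplexOrder

/-- Two families with the same Gram matrix are related by a linear isometry. -/
theorem exists_isometry_of_gram {h k : ℕ} (v w : Fin k → EuclideanSpace ℂ (Fin h))
    (H : ∀ i j, inner ℂ (v i) (v j) = inner ℂ (w i) (w j)) :
    ∃ V : EuclideanSpace ℂ (Fin h) →ₗᵢ[ℂ] EuclideanSpace ℂ (Fin h), ∀ j, V (v j) = w j := by
  let A := Fintype.linearCombination ℂ v
  let B := Fintype.linearCombination ℂ w
  have hn : ∀ c, ‖A c‖ = ‖B c‖ := by
    intro c
    have : (inner ℂ (A c) (A c) : ℂ) = inner ℂ (B c) (B c) := by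
      simp only [A, B, Fintype.linearCombination_apply, sum_inner, inner_sum, inner_smul_left,
        inner_smul_right, H]
    rw [inner_self_eq_norm_sq_to_K, inner_self_eq_norm_sq_to_K] at this
    have h2 : ‖A c‖ ^ 2 = ‖B c‖ ^ 2 := by exact_mod_cast this
    exact (sq_eq_sq₀ (norm_nonneg _) (norm_nonneg _)).1 h2
  have hker : A.ker ≤ B.ker := by
    intro c hc
    rw [LinearMap.mem_ker] at hc ⊢
    rw [← norm_eq_zero, ← hn, hc, norm_zero]
  let L₀ : A.range →ₗ[ℂ] EuclideanSpace ℂ (Fin h) :=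
    (A.ker.liftQ B hker).comp A.quotKerEquivRange.symm.toLinearMap
  have hL : ∀ c (hc : A c ∈ A.range), L₀ ⟨A c, hc⟩ = B c := by
    intro c hc
    simp only [L₀, LinearMap.comp_apply, LinearEquiv.coe_coe]
    rw [LinearMap.quotKerEquivRange_symm_apply_image]
    simp
  let L : A.range →ₗᵢ[ℂ] EuclideanSpace ℂ (Fin h) :=
    { toLinearMap := L₀
      norm_map' := by
        rintro ⟨_, c, rfl⟩
        exact (congrArg norm (hL c (LinearMap.mem_range_self A c))).trans (hn c).symm }
  refine ⟨L.extend, fun j => ?_⟩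
  have hA : A (Pi.single j 1) = v j := by simp [A]
  have hB : B (Pi.single j 1) = w j := by simp [B]
  have h1 := L.extend_apply ⟨A (Pi.single j 1), LinearMap.mem_range_self A _⟩
  have h2 : L ⟨A (Pi.single j 1), LinearMap.mem_range_self A _⟩ = B (Pi.single j 1) := hL _ _
  rw [h2, hB] at h1
  rw [← hA]
  exact h1

/-- **Local transition theorem**: any two purifications of the same density
matrix are related by a local unitary on the purifying system. -/
theorem local_transition_theorem (h k : ℕ) (hh : 0 < h) (hk : 0 < k)
    (ρ : Matrix (Fin k) (Fin k) ℂ) (hρ : ρ.PosSemidef) (hρtr : ρ.trace = 1)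
    (φ₁ φ₂ : Fin h × Fin k → ℂ)
    (hφ₁_unit : ∑ q, ‖φ₁ q‖ ^ 2 = 1) (hφ₂_unit : ∑ q, ‖φ₂ q‖ ^ 2 = 1)
    (hφ₁_pur : ∀ j j' : Fin k,
      ∑ i : Fin h, φ₁ (i, j) * starRingEnd ℂ (φ₁ (i, j')) = ρ j j')
    (hφ₂_pur : ∀ j j' : Fin k,
      ∑ i : Fin h, φ₂ (i, j) * starRingEnd ℂ (φ₂ (i, j')) = ρ j j') :
    ∃ U : Matrix (Fin h) (Fin h) ℂ,
      U * U.conjTranspose = 1 ∧ U.conjTranspose * U = 1 ∧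
      ∀ (i : Fin h) (j : Fin k), ∑ i' : Fin h, U i i' * φ₁ (i', j) = φ₂ (i, j) := by
  let v : Fin k → EuclideanSpace ℂ (Fin h) := fun j => WithLp.toLp 2 fun i => φ₁ (i, j)
  let w : Fin k → EuclideanSpace ℂ (Fin h) := fun j => WithLp.toLp 2 fun i => φ₂ (i, j)
  obtain ⟨V, hV⟩ := exists_isometry_of_gram v w (by
    intro i j
    simp only [v, w, PiLp.inner_apply, RCLike.inner_apply]
    rw [hφ₁_pur, hφ₂_pur])
  let U : Matrix (Fin h) (Fin h) ℂ := fun i i' => V (EuclideanSpace.single i' 1) i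
  have hU : U.conjTranspose * U = 1 := by
    ext a b
    have h1 := V.inner_map_map (EuclideanSpace.single a 1) (EuclideanSpace.single b 1)
    rw [PiLp.inner_apply] at h1
    simp only [RCLike.inner_apply] at h1
    rw [Matrix.mul_apply]
    simp only [Matrix.conjTranspose_apply, U]
    rw [Matrix.one_apply]
    convert h1 using 1
    · exact Finset.sum_congr rfl fun i _ => mul_comm _ _
    · simp [EuclideanSpace.inner_single_left, Pi.single_apply]
  refine ⟨U, mul_eq_one_comm.1 hU, hU, fun i j => ?_⟩
  have hv : v j = ∑ i', φ₁ (i', j) • EuclideanSpace.single i' (1 : ℂ) := by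
    ext a
    simp [v, Pi.single_apply]
  have h2 := congrArg (fun x : EuclideanSpace ℂ (Fin h) => x i) (hV j)
  simp only [hv, map_sum, map_smul] at h2
  simp only [WithLp.ofLp_sum, Finset.sum_apply, PiLp.smul_apply, smul_eq_mul] at h2
  simp only [U]
  rw [Finset.sum_congr rfl fun i' _ => mul_comm _ _]
  exact h2
end

section
/- Let X be a nonempty finite set, let d be a positive integer, and let E : x ↦ ρ_x assign to each x ∈ X a positive definite density matrix ρ_x on ℂ^d. Let b ≥ 0 be a real number and suppose that for every probability distribution q on X (q(x) ≥ 0, Σ_x q(x) = 1), the divergence information of the ensemble {q(x), ρ_x} satisfies Σ_{x∈X} q(x)·D(ρ_x ‖ Σ_{y∈X} q(y)·ρ_y) ≤ b (i.e., the maximum possible divergence information of the encoding E is at most b). Then there exists a probability distribution q on X such that, with ρ := Σ_{y∈X} q(y)·ρ_y, for every x ∈ X one has D(ρ_x ‖ ρ) ≤ b. -/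
open scoped ComplexOrder

lemma mdi_trace_eq {d : ℕ} (M A : Matrix (Fin d) (Fin d) ℂ) (hA : A.IsHermitian) :
    (M * A).trace.re = ∑ i, hA.eigenvalues i *
      (((hA.eigenvectorUnitary : Matrix (Fin d) (Fin d) ℂ).conjTranspose * M *
        (hA.eigenvectorUnitary : Matrix (Fin d) (Fin d) ℂ)) i i).re := by
  have h := hA.spectral_theorem
  rw [Unitary.conjStarAlgAut_apply] at h
  conv_lhs => rw [h]
  set U := (hA.eigenvectorUnitary : Matrix (Fin d) (Fin d) ℂ)
  rw [← Matrix.mul_assoc, Matrix.trace_mul_comm, ← Matrix.mul_assoc, ← Matrix.mul_assoc]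
  rw [Matrix.trace, Complex.re_sum]
  refine Finset.sum_congr rfl fun i _ => ?_
  rw [Matrix.diag_apply, Matrix.mul_diagonal, Matrix.star_eq_conjTranspose]
  simp [mul_comm]

lemma mdi_trace_eq' {d : ℕ} (M A : Matrix (Fin d) (Fin d) ℂ) (hA : A.IsHermitian) :
    M.trace.re = ∑ i, (((hA.eigenvectorUnitary : Matrix (Fin d) (Fin d) ℂ).conjTranspose * M *
        (hA.eigenvectorUnitary : Matrix (Fin d) (Fin d) ℂ)) i i).re := by
  have h2 : (hA.eigenvectorUnitary : Matrix (Fin d) (Fin d) ℂ) *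
    (hA.eigenvectorUnitary : Matrix (Fin d) (Fin d) ℂ).conjTranspose = 1 := by
    rw [← Matrix.star_eq_conjTranspose]; exact Unitary.coe_mul_star_self _
  set U := (hA.eigenvectorUnitary : Matrix (Fin d) (Fin d) ℂ)
  have : (U.conjTranspose * M * U).trace = M.trace := by
    rw [Matrix.trace_mul_comm, ← Matrix.mul_assoc, h2, Matrix.one_mul]
  rw [← this, Matrix.trace, Complex.re_sum]
  rfl

lemma mdi_w_nonneg {d : ℕ} (M U : Matrix (Fin d) (Fin d) ℂ) (hM : M.PosSemidef) (i : Fin d) :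
    0 ≤ ((U.conjTranspose * M * U) i i).re :=
  (Complex.le_def.1 (hM.conjTranspose_mul_mul_same U).diag_nonneg).1

lemma mdi_trace_nonneg {d : ℕ} {M A : Matrix (Fin d) (Fin d) ℂ} (hM : M.PosSemidef)
    (hA : A.PosSemidef) : 0 ≤ (M * A).trace.re := by
  rw [mdi_trace_eq M A hA.isHermitian]
  exact Finset.sum_nonneg fun i _ => mul_nonneg (hA.eigenvalues_nonneg i) (mdi_w_nonneg _ _ hM i)

lemma mdi_upper {d : ℕ} {A : Matrix (Fin d) (Fin d) ℂ} (hA : A.PosSemidef) :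
    ∃ C : ℝ, 0 < C ∧ ∀ M : Matrix (Fin d) (Fin d) ℂ, M.PosSemidef →
      (M * A).trace.re ≤ C * M.trace.re := by
  refine ⟨∑ i, hA.isHermitian.eigenvalues i + 1, ?_, fun M hM => ?_⟩
  · have := Finset.sum_nonneg (s := Finset.univ) fun i _ => hA.eigenvalues_nonneg i
    linarith
  · rw [mdi_trace_eq M A hA.isHermitian, mdi_trace_eq' M A hA.isHermitian, Finset.mul_sum]
    refine Finset.sum_le_sum fun i _ => mul_le_mul_of_nonneg_right ?_ (mdi_w_nonneg _ _ hM i)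
    have := Finset.single_le_sum (f := hA.isHermitian.eigenvalues) (s := Finset.univ)
      (fun i _ => hA.eigenvalues_nonneg i) (Finset.mem_univ i)
    linarith

lemma mdi_lower {d : ℕ} (hd : 0 < d) {A : Matrix (Fin d) (Fin d) ℂ} (hA : A.PosDef) :
    ∃ c : ℝ, 0 < c ∧ ∀ M : Matrix (Fin d) (Fin d) ℂ, M.PosSemidef →
      c * M.trace.re ≤ (M * A).trace.re := by
  have : Nonempty (Fin d) := ⟨⟨0, hd⟩⟩
  obtain ⟨j, hj⟩ := Finite.exists_min hA.isHermitian.eigenvalues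
  refine ⟨hA.isHermitian.eigenvalues j, hA.eigenvalues_pos j, fun M hM => ?_⟩
  rw [mdi_trace_eq M A hA.isHermitian, mdi_trace_eq' M A hA.isHermitian, Finset.mul_sum]
  exact Finset.sum_le_sum fun i _ => mul_le_mul_of_nonneg_right (hj i) (mdi_w_nonneg _ _ hM i)

/-- uniform domination constant -/
lemma mdi_dom {X : Type*} [Fintype X] {d : ℕ} (hd : 0 < d)
    (ρ : X → Matrix (Fin d) (Fin d) ℂ) (hρ : ∀ x, (ρ x).PosDef) :
    ∃ C : ℝ, 1 ≤ C ∧ ∀ M : Matrix (Fin d) (Fin d) ℂ, M.PosSemidef → ∀ x y,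
      (M * ρ x).trace.re ≤ C * (M * ρ y).trace.re := by
  choose u hu hu' using fun x => mdi_upper (hρ x).posSemidef
  choose l hl hl' using fun x => mdi_lower hd (hρ x)
  have hq : ∀ x y, 0 ≤ u x / l y := fun x y => (div_pos (hu x) (hl y)).le
  refine ⟨∑ x, ∑ y, u x / l y + 1, ?_, fun M hM x y => ?_⟩
  · have := Finset.sum_nonneg (s := Finset.univ) fun x _ =>
      Finset.sum_nonneg (s := Finset.univ) fun y _ => hq x y
    linarith
  · have h1 : u x / l y ≤ ∑ x, ∑ y, u x / l y :=
      (Finset.single_le_sum (f := fun y => u x / l y) (s := Finset.univ)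
        (fun y _ => hq x y) (Finset.mem_univ y)).trans
      (Finset.single_le_sum (f := fun x => ∑ y, u x / l y) (s := Finset.univ)
        (fun x _ => Finset.sum_nonneg fun y _ => hq x y) (Finset.mem_univ x))
    have h2 := mdi_trace_nonneg hM (hρ y).posSemidef
    calc (M * ρ x).trace.re ≤ u x * M.trace.re := hu' x M hM
      _ = u x / l y * (l y * M.trace.re) := by have := (hl y).ne'; field_simp
      _ ≤ u x / l y * (M * ρ y).trace.re := mul_le_mul_of_nonneg_left (hl' y M hM) (hq x y)
      _ ≤ _ := mul_le_mul_of_nonneg_right (by linarith) h2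

/-- The abstract minimax argument. -/
lemma mdi_abstract {X I : Type*} [Fintype X] [Nonempty X] [Nonempty I]
    (t : I → X → ℝ) (C : ℝ) (hC : 1 ≤ C) (h0 : ∀ i x, 0 ≤ t i x) (h1 : ∀ i x, t i x ≤ 1)
    (hdom : ∀ i x y, t i x ≤ C * t i y) (D : X → (X → ℝ) → ℝ)
    (hD : ∀ x r, D x r = ⨆ i, t i x * Real.logb 2 (t i x / ∑ y, r y * t i y))
    (b : ℝ)
    (hmax : ∀ q ∈ stdSimplex ℝ X, ∑ x, q x * D x q ≤ b) :
    ∃ q ∈ stdSimplex ℝ X, ∀ x, D x q ≤ b := by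
  classical
  have hdom' : ∀ i x, ∀ r ∈ stdSimplex ℝ X, t i x ≤ C * ∑ y, r y * t i y := by
    intro i x r hr
    calc t i x = ∑ y, r y * t i x := by rw [← Finset.sum_mul, hr.2, one_mul]
      _ ≤ ∑ y, r y * (C * t i y) :=
        Finset.sum_le_sum fun y _ => mul_le_mul_of_nonneg_left (hdom i x y) (hr.1 y)
      _ = _ := by rw [Finset.mul_sum]; exact Finset.sum_congr rfl fun y _ => by ring
  have hpos : ∀ i x, 0 < t i x → ∀ r ∈ stdSimplex ℝ X, 0 < ∑ y, r y * t i y := by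
    intro i x hx r hr
    have := hdom' i x r hr
    by_contra hn
    nlinarith
  have hbdd : ∀ x, ∀ r ∈ stdSimplex ℝ X, BddAbove (Set.range fun i =>
      t i x * Real.logb 2 (t i x / ∑ y, r y * t i y)) := by
    intro x r hr
    refine ⟨Real.logb 2 C, ?_⟩
    rintro _ ⟨i, rfl⟩
    have hlC : 0 ≤ Real.logb 2 C := Real.logb_nonneg (by norm_num) hC
    rcases (h0 i x).eq_or_lt with h | h
    · simpa [← h] using hlC
    · have hs := hpos i x h r hr
      have : Real.logb 2 (t i x / ∑ y, r y * t i y) ≤ Real.logb 2 C :=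
        Real.logb_le_logb_of_le (by norm_num) (div_pos h hs)
          ((div_le_iff₀ hs).2 (hdom' i x r hr))
      calc _ ≤ t i x * Real.logb 2 C := mul_le_mul_of_nonneg_left this (h0 i x)
        _ ≤ _ := mul_le_of_le_one_left hlC (h1 i x)
  have hgcont : ∀ x i, ContinuousOn
      (fun r : X → ℝ => t i x * Real.logb 2 (t i x / ∑ y, r y * t i y)) (stdSimplex ℝ X) := by
    intro x i
    rcases (h0 i x).eq_or_lt with h | h
    · simpa [← h] using continuousOn_const
    · refine continuousOn_const.mul ?_
      simp only [Real.logb]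
      refine ContinuousOn.div_const (ContinuousOn.log (ContinuousOn.div continuousOn_const
        (by fun_prop) ?_) ?_) _
      · exact fun r hr => (hpos i x h r hr).ne'
      · exact fun r hr => (div_pos h (hpos i x h r hr)).ne'
  have hgconv : ∀ x i, ConvexOn ℝ (stdSimplex ℝ X)
      (fun r : X → ℝ => t i x * Real.logb 2 (t i x / ∑ y, r y * t i y)) := by
    intro x i
    refine ⟨convex_stdSimplex ℝ X, ?_⟩
    intro r hr s hs a c ha hc hac
    rcases (h0 i x).eq_or_lt with h | h
    · simp [← h]
    · have hrs := convex_stdSimplex ℝ X hr hs ha hc hac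
      have pr := hpos i x h r hr
      have ps := hpos i x h s hs
      have prs := hpos i x h _ hrs
      have e : ∑ y, (a • r + c • s) y * t i y = a * ∑ y, r y * t i y + c * ∑ y, s y * t i y := by
        rw [Finset.mul_sum, Finset.mul_sum, ← Finset.sum_add_distrib]
        exact Finset.sum_congr rfl fun y _ => by simp; ring
      have conc := strictConcaveOn_log_Ioi.concaveOn.2 (Set.mem_Ioi.2 pr) (Set.mem_Ioi.2 ps)
        ha hc hac
      simp only [smul_eq_mul] at conc ⊢
      rw [← e] at conc
      simp only [Real.logb]
      rw [Real.log_div h.ne' prs.ne', Real.log_div h.ne' pr.ne', Real.log_div h.ne' ps.ne']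
      have hl : 0 < Real.log 2 := Real.log_pos (by norm_num)
      have hk : 0 ≤ t i x / Real.log 2 := (div_pos h hl).le
      have := mul_le_mul_of_nonneg_left conc hk
      have e2 : t i x / Real.log 2 * Real.log (t i x) =
        a * (t i x / Real.log 2 * Real.log (t i x)) + c * (t i x / Real.log 2 * Real.log (t i x)) := by
        rw [← add_mul, hac, one_mul]
      have e3 : ∀ z, t i x * ((Real.log (t i x) - z) / Real.log 2) =
        t i x / Real.log 2 * Real.log (t i x) - t i x / Real.log 2 * z := fun z => by ring
      rw [e3, e3, e3]
      linarith
  have hDconv : ∀ x, ConvexOn ℝ (stdSimplex ℝ X) (D x) := by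
    intro x
    refine ⟨convex_stdSimplex ℝ X, ?_⟩
    intro r hr s hs a c ha hc hac
    rw [hD, hD, hD]
    refine ciSup_le fun i => ((hgconv x i).2 hr hs ha hc hac).trans ?_
    simp only [smul_eq_mul]
    exact add_le_add (mul_le_mul_of_nonneg_left (le_ciSup (hbdd x r hr) i) ha)
      (mul_le_mul_of_nonneg_left (le_ciSup (hbdd x s hs) i) hc)
  have hDlsc : ∀ x, LowerSemicontinuousOn (D x) (stdSimplex ℝ X) := by
    intro x
    have : D x = fun r => ⨆ i, t i x * Real.logb 2 (t i x / ∑ y, r y * t i y) := funext (hD x)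
    rw [this]
    exact lowerSemicontinuousOn_ciSup (hbdd x) fun i => (hgcont x i).lowerSemicontinuousOn
  have ne : (stdSimplex ℝ X).Nonempty :=
    ⟨_, single_mem_stdSimplex ℝ (Classical.arbitrary X)⟩
  obtain ⟨r, hr, q, hq, hsad⟩ := Sion.exists_isSaddlePointOn
    (X := stdSimplex ℝ X) (Y := stdSimplex ℝ X) (f := fun r q => ∑ x, q x * D x r)
    ne (convex_stdSimplex ℝ X) (isCompact_stdSimplex ℝ X)
    (fun q hq => lowerSemicontinuousOn_sum fun x _ =>
      Continuous.comp_lowerSemicontinuousOn (g := fun z : ℝ => q x * z) (by fun_prop) (hDlsc x)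
        (fun u v huv => mul_le_mul_of_nonneg_left huv (hq.1 x)))
    (fun q hq => by
      refine ConvexOn.quasiconvexOn ?_
      refine ⟨convex_stdSimplex ℝ X, ?_⟩
      intro r hr s hs a c ha hc hac
      simp only [smul_eq_mul]
      rw [Finset.mul_sum, Finset.mul_sum, ← Finset.sum_add_distrib]
      refine Finset.sum_le_sum fun x _ => ?_
      have := mul_le_mul_of_nonneg_left ((hDconv x).2 hr hs ha hc hac) (hq.1 x)
      simp only [smul_eq_mul] at this
      linarith)
    (convex_stdSimplex ℝ X) ne (isCompact_stdSimplex ℝ X)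
    (fun r hr => ContinuousOn.upperSemicontinuousOn (by fun_prop))
    (fun r hr => by
      refine ConcaveOn.quasiconcaveOn ?_
      refine ⟨convex_stdSimplex ℝ X, ?_⟩
      intro p hp s hs a c ha hc hac
      simp only [smul_eq_mul]
      rw [Finset.mul_sum, Finset.mul_sum, ← Finset.sum_add_distrib]
      refine Finset.sum_le_sum fun x _ => ?_
      simp only [Pi.add_apply, Pi.smul_apply, smul_eq_mul]
      linarith)
  refine ⟨r, hr, fun x => ?_⟩
  have key := hsad q hq (Pi.single x 1) (single_mem_stdSimplex ℝ x)
  simp only [Pi.single_apply, ite_mul, one_mul, zero_mul, Finset.sum_ite_eq',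
    Finset.mem_univ, if_true] at key
  exact key.trans (hmax q hq)

/-- If the maximum possible divergence information of an encoding `x ↦ ρ_x` is
at most `b`, then there is a single distribution `q` such that with
`ρ = Σ_y q(y)·ρ_y` one has `D(ρ_x‖ρ) ≤ b` for every `x`. -/
theorem max_divergence_information (X : Type*) [Fintype X] [Nonempty X]
    (d : ℕ) (hd : 0 < d)
    (ρ : X → Matrix (Fin d) (Fin d) ℂ)
    (hρ_pd : ∀ x, (ρ x).PosDef) (hρ_tr : ∀ x, (ρ x).trace = 1)
    (b : ℝ) (hb : 0 ≤ b)
    (hmax : ∀ q : X → ℝ, (∀ x, 0 ≤ q x) → ∑ x, q x = 1 →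
      ∑ x, q x * obsDiv (ρ x) (∑ y, (q y : ℂ) • ρ y) ≤ b) :
    ∃ q : X → ℝ, (∀ x, 0 ≤ q x) ∧ ∑ x, q x = 1 ∧
      ∀ x, obsDiv (ρ x) (∑ y, (q y : ℂ) • ρ y) ≤ b := by
  obtain ⟨C, hC, hdom⟩ := mdi_dom hd ρ hρ_pd
  let I := {M : Matrix (Fin d) (Fin d) ℂ // M.PosSemidef ∧ (1 - M).PosSemidef}
  have : Nonempty I := ⟨⟨0, Matrix.PosSemidef.zero, by simpa using Matrix.PosSemidef.one⟩⟩
  obtain ⟨q, hq, h⟩ := mdi_abstract (X := X) (I := I) (fun i x => (i.1 * ρ x).trace.re) C hC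
    (fun i x => mdi_trace_nonneg i.2.1 (hρ_pd x).posSemidef)
    (fun i x => by
      have := mdi_trace_nonneg i.2.2 (hρ_pd x).posSemidef
      rw [Matrix.sub_mul, Matrix.one_mul, Matrix.trace_sub, hρ_tr] at this
      simpa using this)
    (fun i x y => hdom i.1 i.2.1 x y)
    (fun x r => obsDiv (ρ x) (∑ y, (r y : ℂ) • ρ y))
    (fun x r => by
      have e : ∀ M : Matrix (Fin d) (Fin d) ℂ, (M * ∑ y, (r y : ℂ) • ρ y).trace.re =
          ∑ y, r y * (M * ρ y).trace.re := by
        intro M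
        rw [Matrix.mul_sum, Matrix.trace_sum, Complex.re_sum]
        refine Finset.sum_congr rfl fun y _ => ?_
        rw [Matrix.mul_smul, Matrix.trace_smul, smul_eq_mul, Complex.re_ofReal_mul]
      unfold obsDiv iSup
      congr 1
      ext v
      simp only [e]
      constructor
      · rintro ⟨M, h1, h2, rfl⟩
        exact ⟨⟨M, h1, h2⟩, rfl⟩
      · rintro ⟨⟨M, h1, h2⟩, rfl⟩
        exact ⟨M, h1, h2, rfl⟩)
    b (fun q hq => hmax q hq.1 hq.2)
  exact ⟨q, hq.1, hq.2, h⟩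
end

section
/- (Helstrom bound.) Let ρ and σ be density matrices on ℂ^d, and let M be any POVM element on ℂ^d (a d×d complex matrix such that both M and I−M are positive semidefinite). Then the success probability of the corresponding strategy for identifying which of the two equiprobable states was given satisfies (1/2)·Re(Tr(Mρ)) + (1/2)·Re(Tr((I−M)σ)) ≤ 1/2 + (1/4)·‖ρ−σ‖₁; equivalently, Re(Tr(Mρ)) − Re(Tr(Mσ)) ≤ (1/2)·‖ρ−σ‖₁. -/
open scoped ComplexOrder

/-- **Helstrom bound**: for any POVM element `M`, the success probability of
distinguishing two equiprobable states `ρ`, `σ` is at most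
`1/2 + (1/4)·‖ρ−σ‖₁`; equivalently `Re Tr(Mρ) − Re Tr(Mσ) ≤ (1/2)·‖ρ−σ‖₁`,
where `‖·‖₁` is the sum of absolute values of the eigenvalues. -/
theorem helstrom_bound (d : ℕ) (ρ σ : Matrix (Fin d) (Fin d) ℂ)
    (hρ : ρ.PosSemidef) (hρtr : ρ.trace = 1)
    (hσ : σ.PosSemidef) (hσtr : σ.trace = 1)
    (M : Matrix (Fin d) (Fin d) ℂ) (hM : M.PosSemidef) (hM' : (1 - M).PosSemidef)
    (hH : (ρ - σ).IsHermitian) :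
    (1 / 2) * (M * ρ).trace.re + (1 / 2) * ((1 - M) * σ).trace.re ≤
        1 / 2 + (1 / 4) * ∑ i, |hH.eigenvalues i| ∧
      (M * ρ).trace.re - (M * σ).trace.re ≤ (1 / 2) * ∑ i, |hH.eigenvalues i| := by
  have key : (M * ρ).trace.re - (M * σ).trace.re ≤ (1 / 2) * ∑ i, |hH.eigenvalues i| := by
    set U : Matrix (Fin d) (Fin d) ℂ := (hH.eigenvectorUnitary : Matrix (Fin d) (Fin d) ℂ) with hU
    have hUU : U.conjTranspose * U = 1 := Unitary.coe_star_mul_self hH.eigenvectorUnitary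
    have h1 := hM.conjTranspose_mul_mul_same U
    have h2 := hM'.conjTranspose_mul_mul_same U
    have e2 : U.conjTranspose * (1 - M) * U = 1 - U.conjTranspose * M * U := by
      rw [mul_sub, sub_mul, mul_one, hUU]
    rw [e2] at h2
    have hs : ρ - σ = U * Matrix.diagonal (fun i => (hH.eigenvalues i : ℂ)) * U.conjTranspose := by
      have := hH.spectral_theorem
      rw [Unitary.conjStarAlgAut_apply] at this
      exact this
    have ht : (M * ρ).trace.re - (M * σ).trace.re
        = ∑ i, ((U.conjTranspose * M * U) i i).re * hH.eigenvalues i := by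
      rw [← Complex.sub_re, ← Matrix.trace_sub, ← mul_sub, congrArg (fun X => (M * X).trace) hs]
      rw [← mul_assoc, Matrix.trace_mul_comm,
        ← mul_assoc, ← mul_assoc, Matrix.trace, Complex.re_sum]
      refine Finset.sum_congr rfl fun i _ => ?_
      rw [Matrix.diag_apply, Matrix.mul_diagonal, Complex.re_mul_ofReal]
    have h0 : ∑ i, hH.eigenvalues i = 0 := by
      have := hH.trace_eq_sum_eigenvalues
      rw [Matrix.trace_sub, hρtr, hσtr, sub_self] at this
      have h := congrArg Complex.re this
      simpa using h.symm
    have hle : ∑ i, ((U.conjTranspose * M * U) i i).re * hH.eigenvalues i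
        ≤ ∑ i, (1 / 2) * (hH.eigenvalues i + |hH.eigenvalues i|) := by
      refine Finset.sum_le_sum fun i _ => ?_
      have a := (Complex.le_def.1 (h1.diag_nonneg (i := i))).1
      have b := (Complex.le_def.1 (h2.diag_nonneg (i := i))).1
      simp only [Matrix.sub_apply, Matrix.one_apply_eq, Complex.sub_re, Complex.one_re,
        Complex.zero_re] at a b
      rcases abs_cases (hH.eigenvalues i) with ⟨h, h'⟩ | ⟨h, h'⟩ <;> rw [h] <;> nlinarith
    rw [ht]
    refine hle.trans ?_
    rw [← Finset.mul_sum, Finset.sum_add_distrib, h0, zero_add]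
  refine ⟨?_, key⟩
  rw [sub_mul, one_mul, Matrix.trace_sub, hσtr, Complex.sub_re, Complex.one_re]
  linarith
end

section
/- Let n ≥ 1 and let N = 2^n. For each x in a set X of size N, let P_x be a probability distribution on X (P_x(y) ≥ 0, Σ_y P_x(y) = 1), and let P̄ := Σ_x 2^{−n}·P_x be the uniform average; assume P̄(y) > 0 for all y. Then the ξ-information of the uniform ensemble {2^{−n}, P_x} is at least its Holevo-χ information: n + log₂( Σ_{x} Σ_{y} (2^{−n}·P_x(y))² / P̄(y) ) ≥ 2^{−n}·Σ_{x} Σ_{y} P_x(y)·log₂( P_x(y) / P̄(y) ), where terms with P_x(y) = 0 on the right-hand side contribute 0. -/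
/-- Classical (commuting) case of `ξ(E) ≥ χ(E)`: for a uniform ensemble of
probability distributions `P_x` on a set of size `2^n` with average `P̄`,
the ξ-information is at least the Holevo-χ information. -/
theorem xi_ge_chi_classical (n : ℕ) (hn : 1 ≤ n)
    (X : Type*) [Fintype X] (hX : Fintype.card X = 2 ^ n)
    (P : X → X → ℝ)
    (hP_nonneg : ∀ x y, 0 ≤ P x y) (hP_sum : ∀ x, ∑ y, P x y = 1)
    (Pbar : X → ℝ) (hPbar : ∀ y, Pbar y = ∑ x, ((2 : ℝ) ^ n)⁻¹ * P x y)
    (hPbar_pos : ∀ y, 0 < Pbar y) :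
    (n : ℝ) + Real.logb 2 (∑ x, ∑ y, (((2 : ℝ) ^ n)⁻¹ * P x y) ^ 2 / Pbar y) ≥
      ((2 : ℝ) ^ n)⁻¹ * ∑ x, ∑ y, P x y * Real.logb 2 (P x y / Pbar y) := by
  have hN : (0 : ℝ) < 2 ^ n := by positivity
  obtain ⟨q, hq⟩ : ∃ q : ℝ, q = ((2 : ℝ) ^ n)⁻¹ := ⟨_, rfl⟩
  have hq0 : 0 < q := by rw [hq]; positivity
  have hqN : q * 2 ^ n = 1 := by rw [hq]; field_simp
  rw [← hq]
  have hcard : ∑ x, ∑ y, P x y = (2 : ℝ) ^ n := by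
    simp [hP_sum, hX]
  have hnonneg : ∀ x y, 0 ≤ (q * P x y) ^ 2 / Pbar y := fun x y =>
    div_nonneg (sq_nonneg _) (hPbar_pos y).le
  obtain ⟨T, hT⟩ : ∃ T : ℝ, T = ∑ x, ∑ y, (q * P x y) ^ 2 / Pbar y := ⟨_, rfl⟩
  rw [← hT]
  have hTpos : 0 < T := by
    have hne : Nonempty X := by
      apply Fintype.card_pos_iff.mp
      rw [hX]; positivity
    obtain ⟨x⟩ := hne
    obtain ⟨y, -, hy⟩ := Finset.exists_ne_zero_of_sum_ne_zero
      (s := Finset.univ) (f := fun y => P x y) (by rw [hP_sum x]; exact one_ne_zero)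
    have hpos : 0 < P x y := lt_of_le_of_ne (hP_nonneg x y) (Ne.symm hy)
    rw [hT]
    refine Finset.sum_pos' (fun x _ => Finset.sum_nonneg fun y _ => hnonneg x y)
      ⟨x, Finset.mem_univ _, ?_⟩
    refine Finset.sum_pos' (fun y _ => hnonneg x y) ⟨y, Finset.mem_univ _, ?_⟩
    have := hPbar_pos y
    positivity
  -- pointwise bound, with S = 2^n * T
  obtain ⟨S, hS⟩ : ∃ S : ℝ, S = 2 ^ n * T := ⟨_, rfl⟩
  have hSpos : 0 < S := by rw [hS]; positivity
  have hqS : q * S = T := by rw [hS, ← mul_assoc, hqN, one_mul]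
  have key : ∀ x y, P x y * Real.log (P x y / Pbar y) ≤
      P x y * (Real.log S - 1) + (q * P x y) ^ 2 / Pbar y * (1 / (q ^ 2 * S)) := by
    intro x y
    have hb := hPbar_pos y
    rcases (hP_nonneg x y).eq_or_lt with h | h
    · simp [← h]
    · have h1 := Real.log_le_sub_one_of_pos (x := P x y / Pbar y / S) (by positivity)
      rw [Real.log_div (by positivity) hSpos.ne'] at h1
      have h2 : (q * P x y) ^ 2 / Pbar y * (1 / (q ^ 2 * S)) =
          P x y * (P x y / Pbar y / S) := by field_simp
      rw [h2, ← mul_add]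
      apply mul_le_mul_of_nonneg_left _ h.le
      linarith
  have hsum : ∑ x, ∑ y, P x y * Real.log (P x y / Pbar y) ≤ 2 ^ n * Real.log S := by
    calc _ ≤ ∑ x, ∑ y, (P x y * (Real.log S - 1) +
          (q * P x y) ^ 2 / Pbar y * (1 / (q ^ 2 * S))) :=
          Finset.sum_le_sum fun x _ => Finset.sum_le_sum fun y _ => key x y
      _ = 2 ^ n * (Real.log S - 1) + T * (1 / (q ^ 2 * S)) := by
          simp only [Finset.sum_add_distrib, ← Finset.sum_mul]
          rw [hcard, ← hT]
      _ = 2 ^ n * Real.log S := by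
          have : T * (1 / (q ^ 2 * S)) = 2 ^ n := by
            rw [← hqS]
            field_simp
            linarith
          rw [this]; ring
  have hl2 : 0 < Real.log 2 := Real.log_pos (by norm_num)
  have hlogS : Real.log S = n * Real.log 2 + Real.log T := by
    rw [hS, Real.log_mul hN.ne' hTpos.ne', Real.log_pow]
  have hR : ∑ x, ∑ y, P x y * Real.logb 2 (P x y / Pbar y) =
      (∑ x, ∑ y, P x y * Real.log (P x y / Pbar y)) / Real.log 2 := by
    simp only [Real.logb, Finset.sum_div, mul_div_assoc]
  have hL : (n : ℝ) + Real.logb 2 T = Real.log S / Real.log 2 := by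
    rw [hlogS, Real.logb]; field_simp
  rw [hR, hL, ge_iff_le, ← mul_div_assoc]
  apply div_le_div_of_nonneg_right _ hl2.le
  calc _ ≤ q * (2 ^ n * Real.log S) := mul_le_mul_of_nonneg_left hsum hq0.le
    _ = Real.log S := by rw [← mul_assoc, hqN, one_mul]
end

section
/- Let n ≥ 1 be an integer, let 0 < ε < 1 be real, and set δ = 2^{−εn/2} and N = 2^n. For each x in a set X of size N define the probability distribution P_x on X by P_x(x) = δ and P_x(y) = (1−δ)/(N−1) for y ≠ x; then the uniform average P̄ := Σ_x 2^{−n}·P_x is the uniform distribution on X, and the ξ-information of the uniform ensemble {2^{−n}, P_x} satisfies n + log₂( Σ_{x} Σ_{y} (2^{−n}·P_x(y))² / P̄(y) ) ≥ n·(1−ε). -/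
/-- Lower bound half of the exponential separation between ξ-information and
Holevo-χ information: for the ensemble `P_x(x) = 2^(−εn/2)`,
`P_x(y) = (1−2^(−εn/2))/(2^n−1)` for `y ≠ x`, the average `P̄` is uniform and
the ξ-information is at least `n(1−ε)`. -/
theorem xi_separation_lower_bound (n : ℕ) (hn : 1 ≤ n)
    (ε : ℝ) (hε0 : 0 < ε) (hε1 : ε < 1)
    (δ : ℝ) (hδ : δ = (2 : ℝ) ^ (-(ε * n / 2)))
    (X : Type*) [Fintype X] [DecidableEq X] (hX : Fintype.card X = 2 ^ n)
    (P : X → X → ℝ)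
    (hP : ∀ x y, P x y = if y = x then δ else (1 - δ) / ((2 : ℝ) ^ n - 1))
    (Pbar : X → ℝ) (hPbar : ∀ y, Pbar y = ∑ x, ((2 : ℝ) ^ n)⁻¹ * P x y) :
    (∀ y, Pbar y = ((2 : ℝ) ^ n)⁻¹) ∧
      (n : ℝ) + Real.logb 2 (∑ x, ∑ y, (((2 : ℝ) ^ n)⁻¹ * P x y) ^ 2 / Pbar y) ≥
        (n : ℝ) * (1 - ε) := by
  have hN : (1 : ℝ) < (2 : ℝ) ^ n := one_lt_pow₀ (by norm_num) (by omega)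
  have hN0 : (0 : ℝ) < (2 : ℝ) ^ n := by positivity
  have hN1 : (2 : ℝ) ^ n - 1 ≠ 0 := by linarith
  have hcard : ((Fintype.card X : ℕ) : ℝ) = (2 : ℝ) ^ n := by rw [hX]; push_cast; rfl
  have hbar : ∀ y, Pbar y = ((2 : ℝ) ^ n)⁻¹ := by
    intro y
    rw [hPbar, ← Finset.mul_sum]
    have h1 : ∑ x, P x y = 1 := by
      have h2 : ∀ x, P x y = (1 - δ) / ((2 : ℝ) ^ n - 1) +
          (if y = x then δ - (1 - δ) / ((2 : ℝ) ^ n - 1) else 0) := by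
        intro x
        rw [hP]
        split_ifs <;> ring
      simp only [h2]
      rw [Finset.sum_add_distrib, Finset.sum_ite_eq]
      simp only [Finset.sum_const, Finset.card_univ, nsmul_eq_mul, hcard, Finset.mem_univ,
        if_true]
      field_simp
      ring
    rw [h1, mul_one]
  refine ⟨hbar, ?_⟩
  have hsq : δ ^ 2 = (2 : ℝ) ^ (-(ε * n)) := by
    rw [hδ, ← Real.rpow_natCast, ← Real.rpow_mul (by norm_num)]
    congr 1
    push_cast
    ring
  have hle : δ ^ 2 ≤ ∑ x, ∑ y, (((2 : ℝ) ^ n)⁻¹ * P x y) ^ 2 / Pbar y := by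
    calc δ ^ 2 = ∑ _x : X, ((2 : ℝ) ^ n)⁻¹ * δ ^ 2 := by
          simp only [Finset.sum_const, Finset.card_univ, nsmul_eq_mul, hcard]
          field_simp
      _ ≤ _ := by
          refine Finset.sum_le_sum fun x _ => ?_
          have h3 : ((2 : ℝ) ^ n)⁻¹ * δ ^ 2 = (((2 : ℝ) ^ n)⁻¹ * P x x) ^ 2 / Pbar x := by
            rw [hbar, hP, if_pos rfl]
            field_simp
          rw [h3]
          refine Finset.single_le_sum (f := fun y => (((2 : ℝ) ^ n)⁻¹ * P x y) ^ 2 / Pbar y)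
            (fun y _ => ?_) (Finset.mem_univ x)
          rw [hbar]
          positivity
  rw [hsq] at hle
  have hlog := Real.logb_le_logb_of_le (b := 2) (by norm_num) (by positivity) hle
  rw [Real.logb_rpow (by norm_num) (by norm_num)] at hlog
  linarith
end

section
/- Let n ≥ 1 be an integer, let 0 < ε < 1 be real, and set δ = 2^{−εn/2} and N = 2^n. For each x in a set X of size N define the probability distribution P_x on X by P_x(x) = δ and P_x(y) = (1−δ)/(N−1) for y ≠ x; then the uniform average P̄ := Σ_x 2^{−n}·P_x is the uniform distribution on X, and the Holevo-χ information of the uniform ensemble {2^{−n}, P_x} satisfies 2^{−n}·Σ_{x} Σ_{y} P_x(y)·log₂( P_x(y) / P̄(y) ) ≤ 2^{−εn/2}·n·(1−ε/2), where terms with P_x(y) = 0 contribute 0. -/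
/-- Upper bound half of the exponential separation between ξ-information and
Holevo-χ information: for the ensemble `P_x(x) = 2^(−εn/2)`,
`P_x(y) = (1−2^(−εn/2))/(2^n−1)` for `y ≠ x`, the average `P̄` is uniform and
the Holevo-χ information is at most `2^(−εn/2)·n·(1−ε/2)`. -/
theorem chi_separation_upper_bound (n : ℕ) (hn : 1 ≤ n)
    (ε : ℝ) (hε0 : 0 < ε) (hε1 : ε < 1)
    (δ : ℝ) (hδ : δ = (2 : ℝ) ^ (-(ε * n / 2)))
    (X : Type*) [Fintype X] [DecidableEq X] (hX : Fintype.card X = 2 ^ n)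
    (P : X → X → ℝ)
    (hP : ∀ x y, P x y = if y = x then δ else (1 - δ) / ((2 : ℝ) ^ n - 1))
    (Pbar : X → ℝ) (hPbar : ∀ y, Pbar y = ∑ x, ((2 : ℝ) ^ n)⁻¹ * P x y) :
    (∀ y, Pbar y = ((2 : ℝ) ^ n)⁻¹) ∧
      ((2 : ℝ) ^ n)⁻¹ * ∑ x, ∑ y, P x y * Real.logb 2 (P x y / Pbar y) ≤
        (2 : ℝ) ^ (-(ε * n / 2)) * n * (1 - ε / 2) := by
  have hN2 : (2 : ℝ) ≤ 2 ^ n := by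
    calc (2 : ℝ) = 2 ^ 1 := by norm_num
      _ ≤ 2 ^ n := pow_le_pow_right₀ (by norm_num) hn
  have hn' : (1 : ℝ) ≤ n := by exact_mod_cast hn
  have hδ0 : 0 < δ := by rw [hδ]; positivity
  have hδ1 : δ ≤ 1 := by
    rw [hδ]
    apply Real.rpow_le_one_of_one_le_of_nonpos (by norm_num)
    have : 0 ≤ ε * n / 2 := by positivity
    linarith
  have hprod : δ * 2 ^ n = (2 : ℝ) ^ ((n : ℝ) * (1 - ε / 2)) := by
    rw [hδ, ← Real.rpow_natCast, ← Real.rpow_add (by norm_num)]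
    congr 1
    ring
  have hδN : 1 ≤ δ * 2 ^ n := by
    rw [hprod]
    apply Real.one_le_rpow (by norm_num)
    apply mul_nonneg <;> linarith
  have hlog : Real.logb 2 (δ * 2 ^ n) = n * (1 - ε / 2) := by
    rw [hprod, Real.logb_rpow (by norm_num) (by norm_num)]
  have hcard : (Fintype.card X : ℝ) = 2 ^ n := by rw [hX]; push_cast; rfl
  generalize (2 : ℝ) ^ n = N at *
  have hN1 : 0 < N - 1 := by linarith
  have hN0 : 0 < N := by linarith
  have hbar : ∀ y, Pbar y = N⁻¹ := by
    intro y
    rw [hPbar, ← Finset.mul_sum]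
    have h1 : ∑ x, P x y = 1 := by
      have h2 : ∀ x, P x y = (if y = x then δ - (1 - δ) / (N - 1) else 0) +
          (1 - δ) / (N - 1) := by
        intro x
        rw [hP]
        split_ifs <;> ring
      simp only [h2, Finset.sum_add_distrib, Finset.sum_ite_eq, Finset.mem_univ, if_true,
        Finset.sum_const, Finset.card_univ, nsmul_eq_mul, hcard]
      field_simp
      ring
    rw [h1, mul_one]
  refine ⟨hbar, ?_⟩
  rw [← hδ]
  have hb0 : 0 ≤ (1 - δ) / (N - 1) := div_nonneg (by linarith) hN1.le
  have hbN : (1 - δ) / (N - 1) * N ≤ 1 := by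
    rw [div_mul_eq_mul_div, div_le_one hN1]
    linarith
  have hM : Real.logb 2 ((1 - δ) / (N - 1) * N) ≤ 0 :=
    Real.logb_nonpos (by norm_num) (by positivity) hbN
  have hin : ∀ x, ∑ y, P x y * Real.logb 2 (P x y / Pbar y) ≤ δ * (n * (1 - ε / 2)) := by
    intro x
    calc ∑ y, P x y * Real.logb 2 (P x y / Pbar y)
        ≤ ∑ y, (if y = x then δ * (n * (1 - ε / 2)) else 0) := by
          apply Finset.sum_le_sum
          intro y _
          rw [hbar, div_inv_eq_mul, hP]
          split_ifs
          · rw [hlog]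
          · exact mul_nonpos_of_nonneg_of_nonpos hb0 hM
      _ = δ * (n * (1 - ε / 2)) := by simp
  calc N⁻¹ * ∑ x, ∑ y, P x y * Real.logb 2 (P x y / Pbar y)
      ≤ N⁻¹ * ∑ x : X, δ * (n * (1 - ε / 2)) := by
        apply mul_le_mul_of_nonneg_left _ (by positivity)
        exact Finset.sum_le_sum fun x _ => hin x
    _ = δ * n * (1 - ε / 2) := by
        rw [Finset.sum_const, Finset.card_univ, nsmul_eq_mul, hcard]
        field_simp
end
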